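/- arXiv:1608.08913 — 4 statements merged into one kernel-verified Lean document; each statement's English description precedes it below -/
import Mathlib

section
/- Let h>0, 0<s<1. Then there exist constants 0<c_s≤C_s, depending only on s, such that for every m∈ℤ∖{0}: c_s/(h^{2s}|m|^{1+2s}) ≤ K_s^h(m) ≤ C_s/(h^{2s}|m|^{1+2s}). -/
/-- The kernel of the fractional discrete Laplacian on the mesh of size `h`:
`K_s^h(m) = (4^s Γ(1/2+s)/(√π |Γ(-s)|)) · Γ(|m|-s)/(h^{2s} Γ(|m|+1+s))` for `m ≠ 0`,
with `|Γ(-s)| = Γ(1-s)/s`, and `K_s^h(0) = 0`. -/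
noncomputable def Ksh (h s : ℝ) (m : ℤ) : ℝ :=
  if m = 0 then 0 else
    ((4 : ℝ) ^ s * Real.Gamma (1/2 + s) / (Real.sqrt Real.pi * (Real.Gamma (1 - s) / s))) *
      (Real.Gamma (|(m : ℝ)| - s) / (h ^ (2 * s) * Real.Gamma (|(m : ℝ)| + 1 + s)))

/-!
Log-convexity of `Γ` gives `Γ (x + t) ≤ x ^ t * Γ x` for `0 ≤ t ≤ 1`. Applied once on each side of
`x`, this bound and its reflection under `t ↦ 1 - t` trap `Γ (x + 1 + s)` between
`x ^ (2 * s) * (x - s) * Γ (x - s)` and `x ^ (2 * s) * (x + s) * Γ (x - s)`. For `x = |m| ≥ 1` the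
factors `x ± s` are comparable to `x`, with constants depending only on `s`.
-/

section GammaRatio

open Real

variable {s t x : ℝ}

theorem Gamma_add_le_rpow_mul_Gamma (hx : 0 < x) (ht0 : 0 ≤ t) (ht1 : t ≤ 1) :
    Gamma (x + t) ≤ x ^ t * Gamma x := by
  obtain rfl | ht0 := ht0.eq_or_lt
  · simp
  obtain rfl | ht1 := ht1.eq_or_lt
  · simp [Gamma_add_one hx.ne']
  have hΓ : 0 < Gamma x := Gamma_pos_of_pos hx
  calc Gamma (x + t)
      = Gamma ((1 - t) * x + t * (x + 1)) := by ring_nf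
    _ ≤ Gamma x ^ (1 - t) * Gamma (x + 1) ^ t :=
        Gamma_mul_add_mul_le_rpow_Gamma_mul_rpow_Gamma hx (by linarith) (by linarith) ht0 (by ring)
    _ = x ^ t * (Gamma x ^ (1 - t) * Gamma x ^ t) := by
        rw [Gamma_add_one hx.ne', mul_rpow hx.le hΓ.le]; ring
    _ = x ^ t * Gamma x := by rw [← rpow_add hΓ, sub_add_cancel, rpow_one]

theorem rpow_mul_Gamma_add_one_sub_le (hx : 0 < x) (ht0 : 0 ≤ t) (ht1 : t ≤ 1) :
    x ^ t * Gamma (x + 1 - t) ≤ Gamma (x + 1) :=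
  calc x ^ t * Gamma (x + 1 - t)
      = x ^ t * Gamma (x + (1 - t)) := by rw [add_sub_assoc]
    _ ≤ x ^ t * (x ^ (1 - t) * Gamma x) := by
        gcongr
        exact Gamma_add_le_rpow_mul_Gamma hx (by linarith) (by linarith)
    _ = Gamma (x + 1) := by
        rw [← mul_assoc, ← rpow_add hx, add_sub_cancel, rpow_one, Gamma_add_one hx.ne']

theorem Gamma_add_le_rpow_two_mul_mul_Gamma_sub (hs0 : 0 ≤ s) (hs1 : s ≤ 1) (hsx : s < x) :
    Gamma (x + s) ≤ x ^ (2 * s) * Gamma (x - s) := by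
  have hx : 0 < x := hs0.trans_lt hsx
  have hxs : 0 < x - s := sub_pos.2 hsx
  have : 0 < Gamma (x - s) := Gamma_pos_of_pos hxs
  calc Gamma (x + s)
      ≤ x ^ s * Gamma (x - s + s) := by
        simpa only [sub_add_cancel] using Gamma_add_le_rpow_mul_Gamma hx hs0 hs1
    _ ≤ x ^ s * ((x - s) ^ s * Gamma (x - s)) := by
        gcongr
        exact Gamma_add_le_rpow_mul_Gamma hxs hs0 hs1
    _ ≤ x ^ s * (x ^ s * Gamma (x - s)) := by gcongr; linarith
    _ = x ^ (2 * s) * Gamma (x - s) := by rw [← mul_assoc, ← rpow_add hx, two_mul]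

theorem rpow_two_mul_mul_Gamma_add_one_sub_le (hx : 0 < x) (hs0 : 0 ≤ s) (hs1 : s ≤ 1) :
    x ^ (2 * s) * Gamma (x + 1 - s) ≤ Gamma (x + 1 + s) :=
  calc x ^ (2 * s) * Gamma (x + 1 - s)
      = x ^ s * (x ^ s * Gamma (x + 1 - s)) := by rw [← mul_assoc, ← rpow_add hx, two_mul]
    _ ≤ x ^ s * Gamma (x + 1) := by
        gcongr
        exact rpow_mul_Gamma_add_one_sub_le hx hs0 hs1
    _ ≤ (x + s) ^ s * Gamma (x + s + 1 - s) := by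
        rw [add_right_comm, add_sub_cancel_right]
        gcongr
        linarith
    _ ≤ Gamma (x + s + 1) := rpow_mul_Gamma_add_one_sub_le (by linarith) hs0 hs1
    _ = Gamma (x + 1 + s) := by rw [add_right_comm]

theorem inv_two_div_rpow_le_Gamma_sub_div_Gamma (hs0 : 0 ≤ s) (hs1 : s ≤ 1) (hsx : s < x) :
    2⁻¹ / x ^ (1 + 2 * s) ≤ Gamma (x - s) / Gamma (x + 1 + s) := by
  have hx : 0 < x := hs0.trans_lt hsx
  have hxs : 0 < x + s := by linarith
  have : 0 < Gamma (x - s) := Gamma_pos_of_pos (sub_pos.2 hsx)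
  have key : Gamma (x + 1 + s) ≤ 2 * (x ^ (1 + 2 * s) * Gamma (x - s)) :=
    calc Gamma (x + 1 + s)
        = (x + s) * Gamma (x + s) := by rw [add_right_comm, Gamma_add_one hxs.ne']
      _ ≤ 2 * x * (x ^ (2 * s) * Gamma (x - s)) := by
          gcongr
          · linarith
          · exact Gamma_add_le_rpow_two_mul_mul_Gamma_sub hs0 hs1 hsx
      _ = 2 * (x ^ (1 + 2 * s) * Gamma (x - s)) := by rw [rpow_add hx, rpow_one]; ring
  rw [div_le_div_iff₀ (by positivity) (by positivity)]
  linarith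

theorem Gamma_sub_div_Gamma_le_inv_one_sub_div_rpow (hs0 : 0 ≤ s) (hs1 : s < 1) (hx : 1 ≤ x) :
    Gamma (x - s) / Gamma (x + 1 + s) ≤ (1 - s)⁻¹ / x ^ (1 + 2 * s) := by
  have hx0 : 0 < x := by linarith
  have hxs : 0 < x - s := by linarith
  have hs : 0 < 1 - s := sub_pos.2 hs1
  have : 0 < Gamma (x - s) := Gamma_pos_of_pos hxs
  have key : (1 - s) * (x ^ (1 + 2 * s) * Gamma (x - s)) ≤ Gamma (x + 1 + s) :=
    calc (1 - s) * (x ^ (1 + 2 * s) * Gamma (x - s))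
        = x ^ (2 * s) * ((1 - s) * x * Gamma (x - s)) := by rw [rpow_add hx0, rpow_one]; ring
      _ ≤ x ^ (2 * s) * ((x - s) * Gamma (x - s)) := by gcongr; nlinarith
      _ = x ^ (2 * s) * Gamma (x + 1 - s) := by
          rw [← Gamma_add_one hxs.ne', sub_add_eq_add_sub]
      _ ≤ Gamma (x + 1 + s) := rpow_two_mul_mul_Gamma_add_one_sub_le hx0 hs0 hs1.le
  rw [div_le_div_iff₀ (by positivity) (by positivity), inv_mul_eq_div, le_div_iff₀' hs]
  linarith

end GammaRatio

/-- The normalizing constant `4^s Γ(1/2+s) / (√π |Γ(-s)|)` of the kernel `Ksh`, with `|Γ(-s)|`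
written as `Γ(1-s)/s` as in the definition of `Ksh`. -/
noncomputable def kshConst (s : ℝ) : ℝ :=
  (4 : ℝ) ^ s * Real.Gamma (1 / 2 + s) / (Real.sqrt Real.pi * (Real.Gamma (1 - s) / s))

theorem kshConst_pos {s : ℝ} (hs0 : 0 < s) (hs1 : s < 1) : 0 < kshConst s := by
  have : 0 < Real.Gamma (1 - s) := Real.Gamma_pos_of_pos (sub_pos.2 hs1)
  unfold kshConst
  positivity

theorem Ksh_of_ne_zero (h s : ℝ) {m : ℤ} (hm : m ≠ 0) :
    Ksh h s m = kshConst s / h ^ (2 * s) *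
      (Real.Gamma (|(m : ℝ)| - s) / Real.Gamma (|(m : ℝ)| + 1 + s)) := by
  rw [Ksh, if_neg hm, ← kshConst, ← mul_div_assoc, mul_div_mul_comm]

theorem kernel_two_sided_estimate (s : ℝ) (hs0 : 0 < s) (hs1 : s < 1) :
    ∃ c C : ℝ, 0 < c ∧ c ≤ C ∧ ∀ h : ℝ, 0 < h → ∀ m : ℤ, m ≠ 0 →
      c / (h ^ (2 * s) * |(m : ℝ)| ^ (1 + 2 * s)) ≤ Ksh h s m ∧
      Ksh h s m ≤ C / (h ^ (2 * s) * |(m : ℝ)| ^ (1 + 2 * s)) := by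
  have hconst : 0 < kshConst s := kshConst_pos hs0 hs1
  refine ⟨kshConst s * 2⁻¹, kshConst s * (1 - s)⁻¹, by positivity, ?_, fun h hh m hm ↦ ?_⟩
  · exact mul_le_mul_of_nonneg_left (inv_anti₀ (sub_pos.2 hs1) (by linarith)) hconst.le
  have hm1 : 1 ≤ |(m : ℝ)| := by exact_mod_cast Int.one_le_abs hm
  have hscale : 0 ≤ kshConst s / h ^ (2 * s) := by positivity
  rw [Ksh_of_ne_zero h s hm, mul_div_mul_comm, mul_div_mul_comm]
  exact ⟨mul_le_mul_of_nonneg_left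
      (inv_two_div_rpow_le_Gamma_sub_div_Gamma hs0.le hs1.le (hs1.trans_le hm1)) hscale,
    mul_le_mul_of_nonneg_left
      (Gamma_sub_div_Gamma_le_inv_one_sub_div_rpow hs0.le hs1 hm1) hscale⟩
end

section
/- Let h>0 and u:ℤ→ℝ satisfy Σ_{m∈ℤ} |u_m|/(1+|m|) < ∞. Then for every j∈ℤ, lim_{s→0⁺} (-Δ_h)^s u_j = u_j, where (-Δ_h)^s u_j = Σ_{m∈ℤ, m≠j} (u_j−u_m)·K_s^h(j−m) (the series converges absolutely under the stated hypothesis for each 0<s<1). -/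
/-- The fractional discrete Laplacian `(-Δ_h)^s u_j = Σ_{m ≠ j} (u_j - u_m) K_s^h(j-m)`;
since `K_s^h(0) = 0` the sum may be taken over all of `ℤ`. -/
noncomputable def fracLap (h s : ℝ) (u : ℤ → ℝ) (j : ℤ) : ℝ :=
  ∑' m : ℤ, (u j - u m) * Ksh h s (j - m)

/-!
Summing `K_s^h` over `ℤ` telescopes: the total mass is `4^s Γ(1/2+s) / (√π Γ(1+s) h^{2s})`, which
tends to `1` as `s → 0⁺`, while each individual weight satisfies `(1 + |m|) K_s^h(m) ≤ 2s · mass`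
and so disappears in the limit. Hence in `Σ (u_j - u_m) K_s^h(j-m)` the part with `u_j` tends to
`u_j`, and the part with `u_m` is at most `O(s) Σ |u_m| / (1 + |m|)`.
-/

open Filter Real Topology

section GammaRatio

/-- The quotient `Γ(x) / Γ(x + t)` of Gamma values at distance `t`; up to a factor independent of
`m`, the kernel `K_s^h(m)` is `gammaRatio (2 * s + 1) (|m| - s)`. -/
noncomputable def gammaRatio (t x : ℝ) : ℝ :=
  Gamma x / Gamma (x + t)

variable {t x : ℝ}

lemma gammaRatio_pos (hx : 0 < x) (hxt : 0 < x + t) : 0 < gammaRatio t x :=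
  div_pos (Gamma_pos_of_pos hx) (Gamma_pos_of_pos hxt)

lemma gammaRatio_add_one_left (hxt : x + t ≠ 0) :
    gammaRatio (t + 1) x = gammaRatio t x / (x + t) := by
  rw [gammaRatio, gammaRatio, ← add_assoc, Gamma_add_one hxt, mul_comm, div_div]

lemma gammaRatio_add_one_right (hx : x ≠ 0) :
    gammaRatio t (x + 1) = x * gammaRatio (t + 1) x := by
  rw [gammaRatio, gammaRatio, Gamma_add_one hx, add_right_comm, ← add_assoc, mul_div_assoc]

lemma gammaRatio_sub_gammaRatio_add_one (hx : x ≠ 0) (hxt : x + t ≠ 0) :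
    gammaRatio t x - gammaRatio t (x + 1) = t * gammaRatio (t + 1) x := by
  rw [gammaRatio_add_one_right hx, gammaRatio_add_one_left hxt]
  field_simp
  ring

lemma antitone_gammaRatio_add_natCast (hx : 0 < x) (ht : 0 ≤ t) :
    Antitone fun n : ℕ => gammaRatio t (x + n) := by
  refine antitone_nat_of_succ_le fun n => ?_
  have hpos : 0 < gammaRatio (t + 1) (x + n) := gammaRatio_pos (by positivity) (by positivity)
  have hsub := gammaRatio_sub_gammaRatio_add_one (t := t) (x := x + n)
    (by positivity) (by positivity)
  rw [Nat.cast_succ, ← add_assoc, ← sub_nonneg, hsub]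
  positivity

lemma gammaRatio_add_one_left_add_natCast_le (hx : 0 < x) (ht : 0 ≤ t) (n : ℕ) :
    gammaRatio (t + 1) (x + n) ≤ gammaRatio t x / (x + n + t) := by
  rw [gammaRatio_add_one_left (by positivity)]
  gcongr
  simpa using antitone_gammaRatio_add_natCast hx ht n.zero_le

lemma gammaRatio_add_one_right_le_rpow_neg (hx : 0 < x) (ht : 0 < t) :
    gammaRatio t (x + 1) ≤ x ^ (-t) := by
  have hΓx : 0 < Gamma x := Gamma_pos_of_pos hx
  have hΓx1 : 0 < Gamma (x + 1) := Gamma_pos_of_pos (by positivity)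
  have hΓxt : 0 < Gamma (x + 1 + t) := Gamma_pos_of_pos (by positivity)
  have hstep : log (Gamma (x + 1)) - log (Gamma x) = log x := by
    rw [Gamma_add_one hx.ne', log_mul hx.ne' hΓx.ne', add_sub_cancel_right]
  -- Log-convexity of `Γ`: compare the slopes on `[x, x + 1]` and `[x + 1, x + 1 + t]`.
  have hslope : log x ≤ (log (Gamma (x + 1 + t)) - log (Gamma (x + 1))) / t := by
    have hconv := convexOn_log_Gamma.slope_mono_adjacent (x := x) (y := x + 1) (z := x + 1 + t)
      hx (Set.mem_Ioi.2 (by positivity)) (lt_add_one x) (lt_add_of_pos_right _ ht)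
    simpa only [Function.comp_apply, add_sub_cancel_left, div_one, hstep] using hconv
  rw [gammaRatio, ← log_le_log_iff (by positivity) (by positivity),
    log_div hΓx1.ne' hΓxt.ne', log_rpow hx]
  rw [le_div_iff₀ ht] at hslope
  linarith

lemma tendsto_gammaRatio_atTop (ht : 0 < t) : Tendsto (gammaRatio t) atTop (𝓝 0) := by
  have hpow : Tendsto (fun x : ℝ => (x + -1) ^ (-t)) atTop (𝓝 0) :=
    (tendsto_rpow_neg_atTop ht).comp (tendsto_atTop_add_const_right _ _ tendsto_id)
  refine squeeze_zero' ?_ ?_ hpow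
  · filter_upwards [eventually_gt_atTop 0] with x hx
    exact (gammaRatio_pos hx (by positivity)).le
  · filter_upwards [eventually_gt_atTop 1] with x hx
    simpa using gammaRatio_add_one_right_le_rpow_neg (x := x + -1) (by linarith) ht

lemma hasSum_gammaRatio_add_natCast (hx : 0 < x) (ht : 0 < t) :
    HasSum (fun n : ℕ => gammaRatio (t + 1) (x + n)) (gammaRatio t x / t) := by
  have hpartial (N : ℕ) : ∑ n ∈ Finset.range N, gammaRatio (t + 1) (x + n) =
      (gammaRatio t x - gammaRatio t (x + N)) / t := by
    rw [eq_div_iff ht.ne', mul_comm, Finset.mul_sum]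
    have htelescope := Finset.sum_range_sub' (fun n : ℕ => gammaRatio t (x + n)) N
    simp only [Nat.cast_zero, add_zero] at htelescope
    rw [← htelescope]
    refine Finset.sum_congr rfl fun n _ => ?_
    rw [Nat.cast_succ, ← add_assoc,
      gammaRatio_sub_gammaRatio_add_one (by positivity) (by positivity)]
  rw [hasSum_iff_tendsto_nat_of_nonneg
    fun n => (gammaRatio_pos (by positivity) (by positivity)).le]
  simp only [hpartial]
  have hlim : Tendsto (fun N : ℕ => gammaRatio t (x + N)) atTop (𝓝 0) :=
    (tendsto_gammaRatio_atTop ht).comp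
      (tendsto_atTop_add_const_left _ _ tendsto_natCast_atTop_atTop)
  simpa using (hlim.const_sub (gammaRatio t x)).div_const t

end GammaRatio

section Kernel

/-- The total mass `Σ_m K_s^h(m)` in closed form, see `hasSum_Ksh`. -/
noncomputable def kernelMass (h s : ℝ) : ℝ :=
  4 ^ s * Gamma (1 / 2 + s) / (√π * Gamma (1 + s) * h ^ (2 * s))

variable {h s : ℝ}

lemma kernelMass_pos (hh : 0 < h) (hs : 0 < s) : 0 < kernelMass h s := by
  unfold kernelMass
  positivity

lemma tendsto_kernelMass_zero (hh : h ≠ 0) : Tendsto (kernelMass h) (𝓝 0) (𝓝 1) := by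
  have hΓ {a : ℝ} (ha : 0 < a) : ContinuousAt (fun s => Gamma (a + s)) 0 := by
    have hdiff : DifferentiableAt ℝ Gamma (a + 0) := differentiableAt_Gamma fun m => by
      have : (0 : ℝ) ≤ m := m.cast_nonneg
      linarith
    exact hdiff.continuousAt.comp (by fun_prop)
  have hfour : ContinuousAt (fun s : ℝ => (4 : ℝ) ^ s) 0 :=
    (continuous_const_rpow (by norm_num)).continuousAt
  have hmesh : ContinuousAt (fun s : ℝ => h ^ (2 * s)) 0 :=
    ((continuous_const_rpow hh).comp (by fun_prop : Continuous fun s : ℝ => 2 * s)).continuousAt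
  have hcont : ContinuousAt (kernelMass h) 0 :=
    (hfour.mul (hΓ one_half_pos)).div ((continuousAt_const.mul (hΓ one_pos)).mul hmesh)
      (by simp [pi_ne_zero, pi_nonneg])
  have hzero : kernelMass h 0 = 1 := by
    have hsqrt : √π ≠ 0 := (sqrt_pos.2 pi_pos).ne'
    simp only [kernelMass, rpow_zero, mul_zero, add_zero, Gamma_one_half_eq, Gamma_one, one_mul,
      mul_one, div_self hsqrt]
  simpa only [hzero] using hcont.tendsto

@[simp]
lemma Ksh_zero (h s : ℝ) : Ksh h s 0 = 0 := if_pos rfl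

@[simp]
lemma Ksh_neg (h s : ℝ) (m : ℤ) : Ksh h s (-m) = Ksh h s m := by
  simp [Ksh]

lemma Ksh_natCast_add_one (hs : 0 < s) (h : ℝ) (n : ℕ) :
    Ksh h s (n + 1) =
      s * kernelMass h s / gammaRatio (2 * s) (1 - s) * gammaRatio (2 * s + 1) (1 - s + n) := by
  have hΓ : Gamma (1 + s) ≠ 0 := (Gamma_pos_of_pos (by positivity)).ne'
  have habs : |((n + 1 : ℤ) : ℝ)| = n + 1 := by
    push_cast
    exact abs_of_nonneg (by positivity)
  rw [Ksh, if_neg (by positivity), habs, kernelMass, gammaRatio, gammaRatio,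
    show (1 - s + n : ℝ) = n + 1 - s by ring, show 1 - s + 2 * s = 1 + s by ring,
    show (n + 1 - s + (2 * s + 1) : ℝ) = n + 1 + 1 + s by ring]
  field_simp

lemma hasSum_Ksh (h : ℝ) (hs₀ : 0 < s) (hs₁ : s < 1) : HasSum (Ksh h s) (kernelMass h s) := by
  have hratio : gammaRatio (2 * s) (1 - s) ≠ 0 :=
    (gammaRatio_pos (by linarith) (by linarith)).ne'
  have hhalf : HasSum (fun n : ℕ => Ksh h s (n + 1)) (kernelMass h s / 2) := by
    have hsum := (hasSum_gammaRatio_add_natCast (x := 1 - s) (t := 2 * s)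
      (by linarith) (by linarith)).mul_left (s * kernelMass h s / gammaRatio (2 * s) (1 - s))
    have hvalue : kernelMass h s / 2 = s * kernelMass h s / gammaRatio (2 * s) (1 - s) *
        (gammaRatio (2 * s) (1 - s) / (2 * s)) := by
      field_simp
    simpa only [Ksh_natCast_add_one hs₀, hvalue] using hsum
  have hfull := HasSum.of_add_one_of_neg_add_one hhalf (by simpa only [Ksh_neg] using hhalf)
  simpa only [Ksh_zero, add_zero, add_halves] using hfull

lemma Ksh_nonneg (hh : 0 < h) (hs₀ : 0 < s) (hs₁ : s < 1) (m : ℤ) : 0 ≤ Ksh h s m := by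
  rw [Ksh]
  split_ifs with hm
  · rfl
  have habs : (1 : ℝ) ≤ |(m : ℝ)| := by exact_mod_cast Int.one_le_abs hm
  have : 0 < 1 - s := sub_pos.2 hs₁
  have habs_sub : 0 < |(m : ℝ)| - s := by linarith
  positivity

lemma Ksh_natCast_add_one_le (hh : 0 < h) (hs₀ : 0 < s) (hs₁ : s < 1) (n : ℕ) :
    Ksh h s (n + 1) ≤ s * kernelMass h s / (n + 1) := by
  have hmass := kernelMass_pos hh hs₀
  have hratio : 0 < gammaRatio (2 * s) (1 - s) := gammaRatio_pos (by linarith) (by linarith)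
  calc Ksh h s (n + 1)
      = s * kernelMass h s / gammaRatio (2 * s) (1 - s) * gammaRatio (2 * s + 1) (1 - s + n) :=
        Ksh_natCast_add_one hs₀ h n
    _ ≤ s * kernelMass h s / gammaRatio (2 * s) (1 - s) *
          (gammaRatio (2 * s) (1 - s) / (1 - s + n + 2 * s)) := by
        gcongr
        exact gammaRatio_add_one_left_add_natCast_le (by linarith) (by linarith) n
    _ = s * kernelMass h s / (n + 1 + s) := by
        rw [div_mul_div_cancel₀ hratio.ne']
        ring_nf
    _ ≤ s * kernelMass h s / (n + 1) := by
        exact div_le_div_of_nonneg_left (by positivity) (by positivity) (by linarith)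

lemma one_add_abs_mul_Ksh_le (hh : 0 < h) (hs₀ : 0 < s) (hs₁ : s < 1) (m : ℤ) :
    (1 + |(m : ℝ)|) * Ksh h s m ≤ 2 * s * kernelMass h s := by
  have hmass := kernelMass_pos hh hs₀
  wlog hm : 0 ≤ m generalizing m
  · simpa using this (-m) (by lia)
  lift m to ℕ using hm
  rcases m with - | n
  · simpa using by positivity
  calc (1 + |(((n + 1 : ℕ) : ℤ) : ℝ)|) * Ksh h s (n + 1 : ℕ)
      = (n + 2) * Ksh h s (n + 1) := by
        push_cast
        rw [abs_of_nonneg (by positivity)]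
        ring
    _ ≤ (2 * (n + 1)) * (s * kernelMass h s / (n + 1)) := by
        gcongr
        · exact Ksh_nonneg hh hs₀ hs₁ _
        · linarith
        · exact Ksh_natCast_add_one_le hh hs₀ hs₁ n
    _ = 2 * s * kernelMass h s := by
        field_simp

end Kernel

section Convergence

lemma one_add_norm_le_mul_one_add_norm_sub {E : Type*} [SeminormedAddCommGroup E] (a b : E) :
    1 + ‖b‖ ≤ (1 + ‖a‖) * (1 + ‖a - b‖) := by
  have htri : ‖b‖ ≤ ‖a‖ + ‖a - b‖ := norm_le_insert a b
  nlinarith [norm_nonneg a, norm_nonneg (a - b)]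

variable {E : Type*} [NormedAddCommGroup E] [NormedSpace ℝ E]

lemma tendsto_tsum_smul_sub [CompleteSpace E] {ι κ : Type*} {l : Filter ι} {k : ι → κ → ℝ}
    {M c : ι → ℝ} {μ : ℝ} {b : κ → ℝ} {v : κ → E} (a : E)
    (hk : ∀ᶠ i in l, HasSum (k i) (M i)) (hM : Tendsto M l (𝓝 μ)) (hb : Summable b)
    (hkv : ∀ᶠ i in l, ∀ m, ‖k i m • v m‖ ≤ c i * b m) (hc : Tendsto c l (𝓝 0)) :
    Tendsto (fun i => ∑' m, k i m • (a - v m)) l (𝓝 (μ • a)) := by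
  have hv : Tendsto (fun i => ∑' m, k i m • v m) l (𝓝 0) := by
    refine squeeze_zero_norm' (hkv.mono fun i hi => ?_)
      (by simpa using hc.mul_const (∑' m, b m))
    exact tsum_of_norm_bounded (hb.hasSum.mul_left (c i)) hi
  have hsub : Tendsto (fun i => M i • a - ∑' m, k i m • v m) l (𝓝 (μ • a)) := by
    simpa using (hM.smul_const a).sub hv
  refine hsub.congr' ?_
  filter_upwards [hk, hkv] with i hki hkvi
  have hsummable : Summable fun m => k i m • v m :=
    Summable.of_norm_bounded (hb.mul_left (c i)) hkvi
  simp only [smul_sub]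
  exact ((hki.smul_const a).sub hsummable.hasSum).tsum_eq.symm

variable {h s : ℝ}

lemma norm_Ksh_smul_le (hh : 0 < h) (hs₀ : 0 < s) (hs₁ : s < 1) (j m : ℤ) (v : E) :
    ‖Ksh h s (j - m) • v‖ ≤
      2 * s * kernelMass h s * (1 + |(j : ℝ)|) * (‖v‖ / (1 + |(m : ℝ)|)) := by
  have hK := Ksh_nonneg hh hs₀ hs₁ (j - m)
  have hweight : 1 + |(m : ℝ)| ≤ (1 + |(j : ℝ)|) * (1 + |((j - m : ℤ) : ℝ)|) := by
    simpa using one_add_norm_le_mul_one_add_norm_sub (j : ℝ) m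
  rw [norm_smul, norm_of_nonneg hK, ← mul_div_assoc, le_div_iff₀ (by positivity)]
  calc Ksh h s (j - m) * ‖v‖ * (1 + |(m : ℝ)|)
      ≤ Ksh h s (j - m) * ‖v‖ * ((1 + |(j : ℝ)|) * (1 + |((j - m : ℤ) : ℝ)|)) := by gcongr
    _ = (1 + |((j - m : ℤ) : ℝ)|) * Ksh h s (j - m) * (1 + |(j : ℝ)|) * ‖v‖ := by ring
    _ ≤ 2 * s * kernelMass h s * (1 + |(j : ℝ)|) * ‖v‖ := by
        gcongr ?_ * _ * _
        exact one_add_abs_mul_Ksh_le hh hs₀ hs₁ (j - m)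

lemma hasSum_Ksh_sub (h : ℝ) (hs₀ : 0 < s) (hs₁ : s < 1) (j : ℤ) :
    HasSum (fun m : ℤ => Ksh h s (j - m)) (kernelMass h s) :=
  (Equiv.subLeft j).hasSum_iff (f := Ksh h s) |>.2 (hasSum_Ksh h hs₀ hs₁)

lemma summable_norm_Ksh_smul_sub (hh : 0 < h) (hs₀ : 0 < s) (hs₁ : s < 1) {u : ℤ → E}
    (hu : Summable fun m : ℤ => ‖u m‖ / (1 + |(m : ℝ)|)) (j : ℤ) (a : E) :
    Summable fun m => ‖Ksh h s (j - m) • (a - u m)‖ := by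
  have hconst : Summable fun m => ‖Ksh h s (j - m)‖ * ‖a‖ :=
    (hasSum_Ksh_sub h hs₀ hs₁ j).summable.norm.mul_right ‖a‖
  refine Summable.of_nonneg_of_le (fun _ => norm_nonneg _) (fun m => ?_)
    (hconst.add (hu.mul_left (2 * s * kernelMass h s * (1 + |(j : ℝ)|))))
  rw [smul_sub, ← norm_smul]
  exact (norm_sub_le _ _).trans (by gcongr; exact norm_Ksh_smul_le hh hs₀ hs₁ j m (u m))

theorem fracLap_tendsto_id_of_s_to_zero_general [CompleteSpace E] (hh : 0 < h) {u : ℤ → E}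
    (hu : Summable fun m : ℤ => ‖u m‖ / (1 + |(m : ℝ)|)) (j : ℤ) :
    (∀ s : ℝ, 0 < s → s < 1 → Summable fun m => ‖Ksh h s (j - m) • (u j - u m)‖) ∧
    Tendsto (fun s => ∑' m, Ksh h s (j - m) • (u j - u m)) (𝓝[>] 0) (𝓝 (u j)) := by
  refine ⟨fun s hs₀ hs₁ => summable_norm_Ksh_smul_sub hh hs₀ hs₁ hu j (u j), ?_⟩
  have hIoo : ∀ᶠ s : ℝ in 𝓝[>] 0, 0 < s ∧ s < 1 := Ioo_mem_nhdsGT one_pos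
  have hmass : Tendsto (kernelMass h) (𝓝[>] 0) (𝓝 1) :=
    (tendsto_kernelMass_zero hh.ne').mono_left nhdsWithin_le_nhds
  have hid : Tendsto (fun s : ℝ => s) (𝓝[>] 0) (𝓝 0) := nhdsWithin_le_nhds
  have hcoef : Tendsto (fun s => 2 * s * kernelMass h s * (1 + |(j : ℝ)|)) (𝓝[>] 0) (𝓝 0) := by
    simpa using ((hid.const_mul 2).mul hmass).mul_const (1 + |(j : ℝ)|)
  simpa only [one_smul] using tendsto_tsum_smul_sub (u j)
    (hIoo.mono fun s hs => hasSum_Ksh_sub h hs.1 hs.2 j) hmass hu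
    (hIoo.mono fun s hs m => norm_Ksh_smul_le hh hs.1 hs.2 j m (u m)) hcoef

end Convergence

theorem fracLap_tendsto_id_of_s_to_zero (h : ℝ) (hh : 0 < h) (u : ℤ → ℝ)
    (hu : Summable fun m : ℤ => |u m| / (1 + |(m : ℝ)|)) (j : ℤ) :
    (∀ s : ℝ, 0 < s → s < 1 →
      Summable fun m : ℤ => |(u j - u m) * Ksh h s (j - m)|) ∧
    Filter.Tendsto (fun s : ℝ => fracLap h s u j)
      (nhdsWithin 0 (Set.Ioi 0)) (nhds (u j)) := by
  simpa only [fracLap, smul_eq_mul, norm_eq_abs, mul_comm (Ksh _ _ _)] using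
    fracLap_tendsto_id_of_s_to_zero_general (u := u) hh hu j
end

section
/- (Discrete Hardy–Littlewood–Sobolev inequality.) Let h>0, 0<s<1/2, and 1<p<q<∞ with 1/q ≤ 1/p − 2s. There exists a constant C>0, depending only on p, q and s (in particular independent of h), such that for every f:ℤ→ℝ with ‖f‖_{ℓ_h^p}<∞, the function (-Δ_h)^{-s}f_j = Σ_{m∈ℤ} K_{-s}^h(j−m)·f_m is well defined (the series converges absolutely for each j) and ‖(-Δ_h)^{-s}f‖_{ℓ_h^q} ≤ (C/h^{1/p−2s−1/q})·‖f‖_{ℓ_h^p}. -/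
/-- The kernel of the fractional discrete integral (negative power) on the mesh of size `h`. -/
noncomputable def Knsh (h s : ℝ) (m : ℤ) : ℝ :=
  ((4 : ℝ) ^ (-s) * Real.Gamma (1/2 - s) / (Real.sqrt Real.pi * Real.Gamma s)) *
    (h ^ (2 * s) * Real.Gamma (|(m : ℝ)| + s) / Real.Gamma (|(m : ℝ)| + 1 - s))

/-- The fractional discrete integral `(-Δ_h)^{-s} f_j = Σ_{m ∈ ℤ} K_{-s}^h(j-m) f_m`. -/
noncomputable def fracInt (h s : ℝ) (f : ℤ → ℝ) (j : ℤ) : ℝ :=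
  ∑' m : ℤ, Knsh h s (j - m) * f m

/-!
This is Hedberg's argument with the maximal function replaced by an `ℓ^r` sum over dyadic scales,
`p < r < q`. Write `v k j` for the sum of `f` over a window of size `2 ^ k` around `j`, divided by
`2 ^ (k * (1 - 1 / p))`, and normalize `∑ f ^ p = 1`, so that `v k j ≤ 1` by Hölder.

Splitting `f` at the height where `2 ^ k * f ^ p = 1` (`ℓ^r` bound for the small part, `ℓ^1` bound
for the large part) controls `2 ^ (-k) * ∑ j, v k j ^ r` by `∑ m, f m ^ p` weighted with a tent
function of `2 ^ k * f m ^ p`. The tents have a bounded sum over `k`, hence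
`x j = ∑ k, 2 ^ (-k) * v k j ^ r` is summable in `j`.

Since `v k j ≤ min 1 ((2 ^ k * x j) ^ (1 / r))`, summing over the scales gives
`∑ k, 2 ^ (-k / q) * v k j ≤ C * x j ^ (1 / q)`, whose `ℓ^q` norm is therefore bounded. By
log-convexity of `Γ` the kernel at `n` is `O((|n| + 1) ^ (2 * s - 1))`, so it is dominated by
`2 ^ (-k * (1 - 1 / p + 1 / q))` on a window of size `2 ^ k` comparable to `|n| + 1`.
-/

open scoped ENNReal NNReal Finset

/-- The tent function `y ↦ min (y ^ a) (y ^ (-b))`, which peaks at `y = 1` and decays geometrically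
on both sides of it. -/
noncomputable def tent (a b : ℝ) (y : ℝ≥0∞) : ℝ≥0∞ :=
  min (y ^ a) (y ^ (-b))

section Tent

variable {a b : ℝ}

lemma tent_of_le_one (ha : 0 ≤ a) (hb : 0 ≤ b) {y : ℝ≥0∞} (hy : y ≤ 1) : tent a b y = y ^ a :=
  min_eq_left (ENNReal.rpow_le_rpow_of_exponent_ge hy (by linarith))

lemma tent_of_one_le (ha : 0 ≤ a) (hb : 0 ≤ b) {y : ℝ≥0∞} (hy : 1 ≤ y) : tent a b y = y ^ (-b) :=
  min_eq_right (ENNReal.rpow_le_rpow_of_exponent_le hy (by linarith))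

lemma tent_le_one (ha : 0 ≤ a) (hb : 0 ≤ b) (y : ℝ≥0∞) : tent a b y ≤ 1 := by
  rcases le_total y 1 with hy | hy
  · exact (min_le_left _ _).trans (ENNReal.rpow_le_one hy ha)
  · rw [tent_of_one_le ha hb hy, ENNReal.rpow_neg]
    exact ENNReal.inv_le_one.2 ((ENNReal.one_rpow b).symm.trans_le (ENNReal.rpow_le_rpow hy hb))

lemma tsum_two_rpow_neg_pow_lt_top (ha : 0 < a) : ∑' n : ℕ, ((2 : ℝ≥0∞) ^ (-a)) ^ n < ∞ := by
  rw [ENNReal.tsum_geometric, ENNReal.inv_lt_top]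
  exact tsub_pos_of_lt
    (ENNReal.rpow_lt_one_of_one_lt_of_neg ENNReal.one_lt_two (neg_lt_zero.2 ha))

lemma ennreal_pow_rpow_comm (x : ℝ≥0∞) (n : ℕ) (c : ℝ) : (x ^ n) ^ c = (x ^ c) ^ n := by
  rw [← ENNReal.rpow_natCast, ← ENNReal.rpow_natCast, ← ENNReal.rpow_mul, ← ENNReal.rpow_mul,
    mul_comm]

lemma tsum_min_two_zpow_rpow_lt_top (ha : 0 < a) (hb : 0 < b) :
    ∑' i : ℤ, min (((2 : ℝ≥0∞) ^ (i + 1)) ^ a) ((2 ^ i) ^ (-b)) < ∞ := by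
  rw [tsum_of_nat_of_neg_add_one ENNReal.summable ENNReal.summable]
  refine ENNReal.add_lt_top.2 ⟨?_, ?_⟩
  · refine (ENNReal.tsum_le_tsum fun n => ?_).trans_lt (tsum_two_rpow_neg_pow_lt_top hb)
    refine (min_le_right _ _).trans_eq ?_
    rw [zpow_natCast, ennreal_pow_rpow_comm]
  · refine (ENNReal.tsum_le_tsum fun n => ?_).trans_lt (tsum_two_rpow_neg_pow_lt_top ha)
    refine (min_le_left _ _).trans_eq ?_
    rw [neg_add, neg_add_cancel_right, ENNReal.zpow_neg, zpow_natCast, ENNReal.inv_rpow,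
      ennreal_pow_rpow_comm, ENNReal.rpow_neg, ENNReal.inv_pow]

lemma exists_tsum_tent_two_pow_mul_le (ha : 0 < a) (hb : 0 < b) :
    ∃ C : ℝ≥0, ∀ x : ℝ≥0∞, ∑' k : ℕ, tent a b (2 ^ k * x) ≤ C := by
  lift ∑' i : ℤ, min (((2 : ℝ≥0∞) ^ (i + 1)) ^ a) ((2 ^ i) ^ (-b)) to ℝ≥0
    using (tsum_min_two_zpow_rpow_lt_top ha hb).ne with C hC
  refine ⟨C, fun x => ?_⟩
  rcases eq_or_ne x 0 with rfl | hx
  · simp [tent, ha]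
  rcases eq_or_ne x ∞ with rfl | hx'
  · simp [tent, hb, ENNReal.mul_top]
  obtain ⟨n, hn, hn'⟩ :=
    ENNReal.exists_mem_Ico_zpow hx hx' ENNReal.one_lt_two ENNReal.ofNat_ne_top
  have two_zpow_add (i l : ℤ) : (2 : ℝ≥0∞) ^ (i + l) = 2 ^ i * 2 ^ l :=
    ENNReal.zpow_add two_ne_zero ENNReal.ofNat_ne_top i l
  have shift_injective : Function.Injective fun k : ℕ => (k : ℤ) + n :=
    fun k l h => by simpa using h
  rw [hC]
  refine (ENNReal.tsum_le_tsum fun k => ?_).trans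
    (ENNReal.tsum_comp_le_tsum_of_injective shift_injective _)
  refine min_le_min (ENNReal.rpow_le_rpow ?_ ha.le) ?_
  · rw [add_assoc, two_zpow_add, zpow_natCast]
    gcongr
  · rw [ENNReal.rpow_neg, ENNReal.rpow_neg, ENNReal.inv_le_inv, two_zpow_add, zpow_natCast]
    gcongr

lemma exists_tsum_two_pow_rpow_neg_mul_le {γ δ : ℝ} (hδ : 0 < δ) (hδγ : δ < γ) :
    ∃ C : ℝ≥0, ∀ (x : ℝ≥0∞) (v : ℕ → ℝ≥0∞), x ≠ ∞ → (∀ k, v k ≤ 1) →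
      (∀ k, v k ≤ (2 ^ k * x) ^ γ) → ∑' k : ℕ, ((2 : ℝ≥0∞) ^ k) ^ (-δ) * v k ≤ C * x ^ δ := by
  obtain ⟨C, hC⟩ := exists_tsum_tent_two_pow_mul_le (sub_pos.2 hδγ) hδ
  refine ⟨C, fun x v hx hv1 hv => ?_⟩
  rcases eq_or_ne x 0 with rfl | hx0
  · have v_eq_zero (k : ℕ) : v k = 0 := by simpa [hδ.trans hδγ] using hv k
    simp [v_eq_zero]
  refine (ENNReal.tsum_le_tsum fun k => ?_).trans
    (ENNReal.tsum_mul_left.trans_le (mul_le_mul_right (hC x) (x ^ δ))) |>.trans_eq (mul_comm _ _)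
  set y := 2 ^ k * x with hy
  have hy0 : y ≠ 0 := mul_ne_zero (by simp) hx0
  have hy' : y ≠ ∞ := ENNReal.mul_ne_top (by simp) hx
  have v_le : v k ≤ y ^ δ * tent (γ - δ) δ y := by
    rw [tent, mul_min, ← ENNReal.rpow_add _ _ hy0 hy', ← ENNReal.rpow_add _ _ hy0 hy',
      add_sub_cancel, add_neg_cancel, ENNReal.rpow_zero]
    exact le_min (hv k) (hv1 k)
  calc ((2 : ℝ≥0∞) ^ k) ^ (-δ) * v k ≤ (2 ^ k) ^ (-δ) * (y ^ δ * tent (γ - δ) δ y) :=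
        mul_le_mul_right v_le _
    _ = x ^ δ * tent (γ - δ) δ y := by
        rw [hy, ENNReal.mul_rpow_of_nonneg _ _ hδ.le, ← mul_assoc, ← mul_assoc,
          ← ENNReal.rpow_add _ _ (by simp) (by simp), neg_add_cancel, ENNReal.rpow_zero, one_mul]

end Tent

section TentSum

variable {α : Type*} {p r : ℝ}

lemma one_sub_one_div_nonneg (hp : 1 ≤ p) : 0 ≤ 1 - 1 / p := by
  rwa [sub_nonneg, div_le_one (by linarith)]

lemma div_sub_one_nonneg (hp : 0 < p) (hpr : p ≤ r) : 0 ≤ r / p - 1 := by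
  rwa [sub_nonneg, one_le_div hp]

lemma rpow_mul_rpow_eq_mul_tent {x N : ℝ≥0∞} (hp : 1 ≤ p) (hpr : p ≤ r) (hN : N ≠ 0)
    (hN' : N ≠ ∞) (hx : N * x ^ p ≤ 1) :
    N ^ r * x ^ r =
      N ^ (r * (1 - 1 / p) + 1) * (x ^ p * tent (r / p - 1) (1 - 1 / p) (N * x ^ p)) := by
  have hp0 : 0 < p := by linarith
  have ha := div_sub_one_nonneg hp0 hpr
  rw [tent_of_le_one ha (one_sub_one_div_nonneg hp) hx, ENNReal.mul_rpow_of_nonneg _ _ ha,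
    ← ENNReal.rpow_mul, mul_left_comm (x ^ p), ← mul_assoc, ← ENNReal.rpow_add _ _ hN hN',
    ← ENNReal.rpow_add_of_nonneg _ _ hp0.le (by positivity)]
  congr 2 <;> field_simp <;> ring

lemma eq_rpow_mul_tent {x N : ℝ≥0∞} (hp : 1 ≤ p) (hpr : p ≤ r) (hx' : x ≠ ∞) (hN : N ≠ 0)
    (hN' : N ≠ ∞) (hx : 1 ≤ N * x ^ p) :
    x = N ^ (1 - 1 / p) * (x ^ p * tent (r / p - 1) (1 - 1 / p) (N * x ^ p)) := by
  have hp0 : 0 < p := by linarith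
  have hx0 : x ≠ 0 := by
    rintro rfl
    simp [hp0] at hx
  have exponent_eq : p + p * -(1 - 1 / p) = 1 := by
    field_simp
    ring
  rw [tent_of_one_le (div_sub_one_nonneg hp0 hpr) (one_sub_one_div_nonneg hp) hx,
    ENNReal.mul_rpow_of_ne_top hN' (ENNReal.rpow_ne_top_of_nonneg hp0.le hx'),
    ← ENNReal.rpow_mul, mul_left_comm (x ^ p), ← mul_assoc, ← ENNReal.rpow_add _ _ hN hN',
    ← ENNReal.rpow_add _ _ hx0 hx', add_neg_cancel, ENNReal.rpow_zero, one_mul, exponent_eq,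
    ENNReal.rpow_one]

/-- The sum of `f ^ p` weighted by a tent function of `N * f ^ p`, so that the main contribution
comes from the points where `f ^ p` is comparable to `N⁻¹`. -/
noncomputable def tentSum (p r : ℝ) (N : ℝ≥0∞) (f : α → ℝ≥0∞) : ℝ≥0∞ :=
  ∑' m, f m ^ p * tent (r / p - 1) (1 - 1 / p) (N * f m ^ p)

lemma tentSum_le (hp : 1 ≤ p) (hpr : p ≤ r) (N : ℝ≥0∞) (f : α → ℝ≥0∞) :
    tentSum p r N f ≤ ∑' m, f m ^ p :=
  ENNReal.tsum_le_tsum fun _ => mul_le_of_le_one_right'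
    (tent_le_one (div_sub_one_nonneg (by linarith) hpr) (one_sub_one_div_nonneg hp) _)

lemma tentSum_indicator_le (hp : 0 < p) (N : ℝ≥0∞) (s : Set α) (f : α → ℝ≥0∞) :
    tentSum p r N (s.indicator f) ≤ tentSum p r N f := by
  refine ENNReal.tsum_le_tsum fun m => ?_
  by_cases hm : m ∈ s
  · rw [Set.indicator_of_mem hm]
  · simp [Set.indicator_of_notMem hm, hp]

lemma exists_tsum_tentSum_two_pow_le (hp : 1 < p) (hpr : p < r) :
    ∃ C : ℝ≥0, ∀ f : α → ℝ≥0∞, ∑' k : ℕ, tentSum p r (2 ^ k) f ≤ C * ∑' m, f m ^ p := by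
  obtain ⟨C, hC⟩ := exists_tsum_tent_two_pow_mul_le (a := r / p - 1) (b := 1 - 1 / p)
    (by rw [sub_pos, one_lt_div (by linarith)]; exact hpr)
    (by rw [sub_pos, div_lt_one (by linarith)]; exact hp)
  refine ⟨C, fun f => ?_⟩
  simp only [tentSum]
  rw [ENNReal.tsum_comm, ← ENNReal.tsum_mul_left]
  refine ENNReal.tsum_le_tsum fun m => ?_
  rw [ENNReal.tsum_mul_left, mul_comm]
  exact mul_le_mul_left (hC _) _

end TentSum

lemma ennreal_rpow_eq_rpow_sub_one_mul {r : ℝ} (hr : 1 ≤ r) (x : ℝ≥0∞) :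
    x ^ r = x ^ (r - 1) * x := by
  nth_rw 3 [← ENNReal.rpow_one x]
  rw [← ENNReal.rpow_add_of_nonneg _ _ (by linarith) zero_le_one, sub_add_cancel]

section WindowSum

variable {G : Type*} [AddGroup G]

/-- The sum of `f` over the window `j - B`. -/
noncomputable def windowSum (B : Finset G) (f : G → ℝ≥0∞) (j : G) : ℝ≥0∞ :=
  ∑ n ∈ B, f (j - n)

lemma windowSum_add (B : Finset G) (f g : G → ℝ≥0∞) (j : G) :
    windowSum B (fun m => f m + g m) j = windowSum B f j + windowSum B g j :=
  Finset.sum_add_distrib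

lemma windowSum_const_mul (B : Finset G) (c : ℝ≥0∞) (f : G → ℝ≥0∞) (j : G) :
    windowSum B (fun m => c * f m) j = c * windowSum B f j :=
  (Finset.mul_sum _ _ _).symm

lemma windowSum_le_tsum (B : Finset G) (f : G → ℝ≥0∞) (j : G) : windowSum B f j ≤ ∑' m, f m :=
  (ENNReal.sum_le_tsum B).trans
    (ENNReal.tsum_comp_le_tsum_of_injective (sub_right_injective (b := j)) f)

lemma tsum_windowSum (B : Finset G) (f : G → ℝ≥0∞) :
    ∑' j, windowSum B f j = #B * ∑' m, f m := by
  simp only [windowSum]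
  rw [Summable.tsum_finsetSum fun _ _ => ENNReal.summable]
  simp only [(Equiv.subRight _).tsum_eq f, ← Equiv.subRight_apply, Finset.sum_const, nsmul_eq_mul]

lemma windowSum_rpow_le {r : ℝ} (hr : 1 ≤ r) (B : Finset G) (f : G → ℝ≥0∞) (j : G) :
    windowSum B f j ^ r ≤ #B ^ (r - 1) * windowSum B (fun m => f m ^ r) j :=
  ENNReal.rpow_sum_le_const_mul_sum_rpow B _ hr

lemma windowSum_le_rpow {p : ℝ} (hp : 1 ≤ p) (B : Finset G) {f : G → ℝ≥0∞}
    (hf : ∑' m, f m ^ p ≤ 1) (j : G) : windowSum B f j ≤ #B ^ (1 - 1 / p) := by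
  have hp0 : 0 < p := by linarith
  rw [← ENNReal.rpow_le_rpow_iff hp0, ← ENNReal.rpow_mul, sub_mul, one_mul,
    one_div_mul_cancel hp0.ne']
  exact (windowSum_rpow_le hp B f j).trans
    (mul_le_of_le_one_right' ((windowSum_le_tsum _ _ _).trans hf))

lemma tsum_windowSum_rpow_le_card_rpow_mul_tsum_rpow {r : ℝ} (hr : 1 ≤ r) (B : Finset G)
    (f : G → ℝ≥0∞) : ∑' j, windowSum B f j ^ r ≤ #B ^ r * ∑' m, f m ^ r :=
  calc ∑' j, windowSum B f j ^ r
      ≤ ∑' j, (#B : ℝ≥0∞) ^ (r - 1) * windowSum B (fun m => f m ^ r) j :=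
        ENNReal.tsum_le_tsum (windowSum_rpow_le hr B f)
    _ = #B ^ r * ∑' m, f m ^ r := by
        rw [ENNReal.tsum_mul_left, tsum_windowSum, ← mul_assoc,
          ← ennreal_rpow_eq_rpow_sub_one_mul hr]

lemma tsum_windowSum_rpow_le_card_mul_tsum_rpow {r : ℝ} (hr : 1 ≤ r) (B : Finset G)
    (f : G → ℝ≥0∞) : ∑' j, windowSum B f j ^ r ≤ #B * (∑' m, f m) ^ r :=
  calc ∑' j, windowSum B f j ^ r
      ≤ ∑' j, (∑' m, f m) ^ (r - 1) * windowSum B f j := by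
        gcongr with j
        rw [ennreal_rpow_eq_rpow_sub_one_mul hr]
        gcongr
        exact windowSum_le_tsum B f j
    _ = #B * (∑' m, f m) ^ r := by
        rw [ENNReal.tsum_mul_left, tsum_windowSum, ennreal_rpow_eq_rpow_sub_one_mul hr]
        ring

variable {p r : ℝ} {B : Finset G} {f : G → ℝ≥0∞}

lemma tsum_windowSum_rpow_le_of_card_mul_rpow_le_one (hp : 1 ≤ p) (hpr : p ≤ r)
    (hB : B.Nonempty) (hf : ∀ m, #B * f m ^ p ≤ 1) :
    ∑' j, windowSum B f j ^ r ≤ #B ^ (r * (1 - 1 / p) + 1) * tentSum p r #B f := by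
  have hB0 : (#B : ℝ≥0∞) ≠ 0 := Nat.cast_ne_zero.2 hB.card_ne_zero
  refine (tsum_windowSum_rpow_le_card_rpow_mul_tsum_rpow (hp.trans hpr) B f).trans_eq ?_
  rw [tentSum, ← ENNReal.tsum_mul_left, ← ENNReal.tsum_mul_left]
  congr 1 with m
  exact rpow_mul_rpow_eq_mul_tent hp hpr hB0 (ENNReal.natCast_ne_top _) (hf m)

lemma tsum_windowSum_rpow_le_of_one_le_card_mul_rpow (hp : 1 ≤ p) (hpr : p ≤ r)
    (hB : B.Nonempty) (hf : ∀ m, f m ≠ 0 → 1 ≤ #B * f m ^ p) (hf1 : ∑' m, f m ^ p ≤ 1) :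
    ∑' j, windowSum B f j ^ r ≤ #B ^ (r * (1 - 1 / p) + 1) * tentSum p r #B f := by
  have hp0 : 0 < p := by linarith
  have hr : 1 ≤ r := hp.trans hpr
  have hB0 : (#B : ℝ≥0∞) ≠ 0 := Nat.cast_ne_zero.2 hB.card_ne_zero
  have hB' : (#B : ℝ≥0∞) ≠ ∞ := ENNReal.natCast_ne_top _
  have f_ne_top (m : G) : f m ≠ ∞ := fun hm => by
    have h := (ENNReal.le_tsum m).trans hf1
    simp [hm, hp0] at h
  have tsum_eq : ∑' m, f m = #B ^ (1 - 1 / p) * tentSum p r #B f := by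
    rw [tentSum, ← ENNReal.tsum_mul_left]
    congr 1 with m
    rcases eq_or_ne (f m) 0 with hm | hm
    · simp [hm, hp0]
    · exact eq_rpow_mul_tent hp hpr (f_ne_top m) hB0 hB' (hf m hm)
  have tentSum_le_one : tentSum p r #B f ≤ 1 := (tentSum_le hp hpr _ f).trans hf1
  calc ∑' j, windowSum B f j ^ r
      ≤ #B * (#B ^ (1 - 1 / p) * tentSum p r #B f) ^ r :=
        tsum_eq ▸ tsum_windowSum_rpow_le_card_mul_tsum_rpow hr B f
    _ = #B ^ (r * (1 - 1 / p) + 1) * tentSum p r #B f ^ r := by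
        rw [ENNReal.mul_rpow_of_nonneg _ _ (by linarith), ← ENNReal.rpow_mul, ← mul_assoc,
          ENNReal.rpow_add _ _ hB0 hB', ENNReal.rpow_one, mul_comm r, mul_comm (#B : ℝ≥0∞)]
    _ ≤ #B ^ (r * (1 - 1 / p) + 1) * tentSum p r #B f := by
        gcongr
        exact ENNReal.rpow_le_self_of_le_one tentSum_le_one hr

lemma tsum_windowSum_rpow_le_tentSum (hp : 1 ≤ p) (hpr : p ≤ r) (hB : B.Nonempty)
    (hf : ∑' m, f m ^ p ≤ 1) :
    ∑' j, windowSum B f j ^ r ≤ 2 ^ r * (#B ^ (r * (1 - 1 / p) + 1) * tentSum p r #B f) := by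
  have hp0 : 0 < p := by linarith
  have hr : 1 ≤ r := hp.trans hpr
  set A := (#B : ℝ≥0∞) ^ (r * (1 - 1 / p) + 1) * tentSum p r #B f
  let s : Set G := {m | #B * f m ^ p ≤ 1}
  have small_le : ∑' j, windowSum B (s.indicator f) j ^ r ≤ A := by
    refine (tsum_windowSum_rpow_le_of_card_mul_rpow_le_one hp hpr hB fun m => ?_).trans
      (mul_le_mul_right (tentSum_indicator_le hp0 _ s f) _)
    by_cases hm : m ∈ s
    · rwa [Set.indicator_of_mem hm]
    · simp [Set.indicator_of_notMem hm, hp0]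
  have large_le : ∑' j, windowSum B (sᶜ.indicator f) j ^ r ≤ A := by
    refine (tsum_windowSum_rpow_le_of_one_le_card_mul_rpow hp hpr hB (fun m hm => ?_) ?_).trans
      (mul_le_mul_right (tentSum_indicator_le hp0 _ sᶜ f) _)
    · have hms : m ∈ sᶜ := Set.mem_of_indicator_ne_zero hm
      rw [Set.indicator_of_mem hms]
      exact le_of_not_ge hms
    · refine (ENNReal.tsum_le_tsum fun m => ?_).trans hf
      exact ENNReal.rpow_le_rpow (Set.indicator_le_self _ _ _) hp0.le
  calc ∑' j, windowSum B f j ^ r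
      = ∑' j, (windowSum B (s.indicator f) j + windowSum B (sᶜ.indicator f) j) ^ r := by
        simp only [← windowSum_add, Set.indicator_self_add_compl_apply]
    _ ≤ ∑' j, 2 ^ (r - 1) *
          (windowSum B (s.indicator f) j ^ r + windowSum B (sᶜ.indicator f) j ^ r) :=
        ENNReal.tsum_le_tsum fun _ => ENNReal.rpow_add_le_mul_rpow_add_rpow _ _ hr
    _ ≤ 2 ^ (r - 1) * (A + A) := by
        rw [ENNReal.tsum_mul_left, ENNReal.tsum_add]
        gcongr
    _ = 2 ^ r * A := by
        rw [ennreal_rpow_eq_rpow_sub_one_mul hr, mul_assoc, two_mul]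

/-- The window sum normalized by Hölder's inequality: it is at most the `ℓ^p` norm of `f`. -/
noncomputable def normalizedWindowSum (p : ℝ) (B : Finset G) (f : G → ℝ≥0∞) (j : G) : ℝ≥0∞ :=
  #B ^ (-(1 - 1 / p)) * windowSum B f j

lemma normalizedWindowSum_le_one (hp : 1 ≤ p) (hB : B.Nonempty) (hf : ∑' m, f m ^ p ≤ 1) (j : G) :
    normalizedWindowSum p B f j ≤ 1 := by
  have hB0 : (#B : ℝ≥0∞) ≠ 0 := Nat.cast_ne_zero.2 hB.card_ne_zero
  calc normalizedWindowSum p B f j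
      ≤ #B ^ (-(1 - 1 / p)) * #B ^ (1 - 1 / p) :=
        mul_le_mul_right (windowSum_le_rpow hp B hf j) _
    _ = 1 := by
        rw [← ENNReal.rpow_add _ _ hB0 (ENNReal.natCast_ne_top _), neg_add_cancel,
          ENNReal.rpow_zero]

lemma tsum_normalizedWindowSum_rpow_le (hp : 1 ≤ p) (hpr : p ≤ r) (hB : B.Nonempty)
    (hf : ∑' m, f m ^ p ≤ 1) :
    (#B : ℝ≥0∞)⁻¹ * ∑' j, normalizedWindowSum p B f j ^ r ≤ 2 ^ r * tentSum p r #B f := by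
  have hr0 : 0 ≤ r := by linarith
  have hB0 : (#B : ℝ≥0∞) ≠ 0 := Nat.cast_ne_zero.2 hB.card_ne_zero
  have hB' : (#B : ℝ≥0∞) ≠ ∞ := ENNReal.natCast_ne_top _
  simp only [normalizedWindowSum, ENNReal.mul_rpow_of_nonneg _ _ hr0, ENNReal.tsum_mul_left,
    ← ENNReal.rpow_mul]
  rw [← mul_assoc, ← ENNReal.rpow_neg_one, ← ENNReal.rpow_add _ _ hB0 hB']
  calc (#B : ℝ≥0∞) ^ (-1 + -(1 - 1 / p) * r) * ∑' j, windowSum B f j ^ r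
      ≤ #B ^ (-1 + -(1 - 1 / p) * r) *
          (2 ^ r * (#B ^ (r * (1 - 1 / p) + 1) * tentSum p r #B f)) :=
        mul_le_mul_right (tsum_windowSum_rpow_le_tentSum hp hpr hB hf) _
    _ = 2 ^ r * tentSum p r #B f := by
        rw [mul_left_comm, ← mul_assoc (_ ^ (_ + _)), ← ENNReal.rpow_add _ _ hB0 hB']
        ring_nf
        simp

end WindowSum

section DyadicPotential

variable {G : Type*} [AddGroup G] {p q r : ℝ} {B : ℕ → Finset G}

lemma exists_tsum_tsum_normalizedWindowSum_rpow_le (hp : 1 < p) (hpr : p < r)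
    (hB : ∀ k, #(B k) = 2 ^ k) :
    ∃ C : ℝ≥0, ∀ f : G → ℝ≥0∞, ∑' m, f m ^ p ≤ 1 →
      ∑' j, ∑' k, ((2 : ℝ≥0∞) ^ k)⁻¹ * normalizedWindowSum p (B k) f j ^ r ≤ C := by
  have hr0 : 0 ≤ r := by linarith
  obtain ⟨C, hC⟩ := exists_tsum_tentSum_two_pow_le (α := G) hp hpr
  refine ⟨2 ^ r * C, fun f hf => ?_⟩
  have scale_le (k : ℕ) : ∑' j, ((2 : ℝ≥0∞) ^ k)⁻¹ * normalizedWindowSum p (B k) f j ^ r ≤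
      2 ^ r * tentSum p r (2 ^ k) f := by
    have hBk : (B k).Nonempty := Finset.card_pos.1 (by rw [hB]; positivity)
    have h := tsum_normalizedWindowSum_rpow_le hp.le hpr.le hBk hf
    rw [hB, Nat.cast_pow, Nat.cast_ofNat] at h
    rwa [ENNReal.tsum_mul_left]
  calc ∑' j, ∑' k, ((2 : ℝ≥0∞) ^ k)⁻¹ * normalizedWindowSum p (B k) f j ^ r
      = ∑' k, ∑' j, ((2 : ℝ≥0∞) ^ k)⁻¹ * normalizedWindowSum p (B k) f j ^ r :=
        ENNReal.tsum_comm
    _ ≤ ∑' k, 2 ^ r * tentSum p r (2 ^ k) f := ENNReal.tsum_le_tsum scale_le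
    _ = 2 ^ r * ∑' k, tentSum p r (2 ^ k) f := ENNReal.tsum_mul_left
    _ ≤ 2 ^ r * (C * 1) := by
        gcongr
        exact (hC f).trans (mul_le_mul_right hf _)
    _ = (2 ^ r * C : ℝ≥0) := by
        rw [mul_one, ENNReal.coe_mul, ENNReal.coe_rpow_of_nonneg _ hr0, ENNReal.coe_ofNat]

/-- The superposition of the window sums over `B 0, B 1, …` with weights `2 ^ (-k * l)`. When
`B k` has about `2 ^ k` elements around the origin, this is a Riesz potential of kernel
`|n| ^ (-l)`. -/
noncomputable def dyadicPotential (l : ℝ) (B : ℕ → Finset G) (f : G → ℝ≥0∞) (j : G) : ℝ≥0∞ :=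
  ∑' k, ((2 : ℝ≥0∞) ^ k) ^ (-l) * windowSum (B k) f j

lemma dyadicPotential_const_mul (l : ℝ) (B : ℕ → Finset G) (c : ℝ≥0∞) (f : G → ℝ≥0∞) (j : G) :
    dyadicPotential l B (fun m => c * f m) j = c * dyadicPotential l B f j := by
  simp only [dyadicPotential, windowSum_const_mul, mul_left_comm _ c, ENNReal.tsum_mul_left]

lemma dyadicPotential_eq_tsum_normalizedWindowSum (hB : ∀ k, #(B k) = 2 ^ k) (δ : ℝ)
    (f : G → ℝ≥0∞) (j : G) :
    dyadicPotential (1 - 1 / p + δ) B f j =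
      ∑' k, ((2 : ℝ≥0∞) ^ k) ^ (-δ) * normalizedWindowSum p (B k) f j := by
  refine tsum_congr fun k => ?_
  rw [normalizedWindowSum, hB, Nat.cast_pow, Nat.cast_ofNat, ← mul_assoc,
    ← ENNReal.rpow_add _ _ (by simp) (by simp), neg_add_rev]

lemma exists_tsum_dyadicPotential_rpow_le (hp : 1 < p) (hpq : p < q)
    (hB : ∀ k, #(B k) = 2 ^ k) :
    ∃ C : ℝ≥0, ∀ f : G → ℝ≥0∞, ∑' m, f m ^ p ≤ 1 →
      ∑' j, dyadicPotential (1 - 1 / p + 1 / q) B f j ^ q ≤ C := by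
  obtain ⟨r, hpr, hrq⟩ := exists_between hpq
  have hr0 : 0 < r := by linarith
  have hq0 : 0 < q := by linarith
  obtain ⟨C₁, hC₁⟩ := exists_tsum_tsum_normalizedWindowSum_rpow_le hp hpr hB
  obtain ⟨C₂, hC₂⟩ := exists_tsum_two_pow_rpow_neg_mul_le (one_div_pos.2 hq0)
    (one_div_lt_one_div_of_lt hr0 hrq)
  refine ⟨C₂ ^ q * C₁, fun f hf => ?_⟩
  let x (j : G) : ℝ≥0∞ := ∑' k, ((2 : ℝ≥0∞) ^ k)⁻¹ * normalizedWindowSum p (B k) f j ^ r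
  have x_ne_top (j : G) : x j ≠ ∞ :=
    (((ENNReal.le_tsum j).trans (hC₁ f hf)).trans_lt ENNReal.coe_lt_top).ne
  have normalizedWindowSum_le (j : G) (k : ℕ) :
      normalizedWindowSum p (B k) f j ≤ (2 ^ k * x j) ^ (1 / r) := by
    rw [one_div, ENNReal.le_rpow_inv_iff hr0]
    calc normalizedWindowSum p (B k) f j ^ r
        = 2 ^ k * (((2 : ℝ≥0∞) ^ k)⁻¹ * normalizedWindowSum p (B k) f j ^ r) :=
          (ENNReal.mul_inv_cancel_left (by simp) (by simp)).symm
      _ ≤ 2 ^ k * x j := mul_le_mul_right (ENNReal.le_tsum k) _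
  have dyadicPotential_le (j : G) :
      dyadicPotential (1 - 1 / p + 1 / q) B f j ≤ C₂ * x j ^ (1 / q) := by
    rw [dyadicPotential_eq_tsum_normalizedWindowSum hB]
    refine hC₂ (x j) _ (x_ne_top j) (fun k => ?_) (normalizedWindowSum_le j)
    exact normalizedWindowSum_le_one hp.le (Finset.card_pos.1 (by rw [hB]; positivity)) hf j
  calc ∑' j, dyadicPotential (1 - 1 / p + 1 / q) B f j ^ q
      ≤ ∑' j, (C₂ : ℝ≥0∞) ^ q * x j := by
        gcongr with j
        refine (ENNReal.rpow_le_rpow (dyadicPotential_le j) hq0.le).trans_eq ?_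
        rw [ENNReal.mul_rpow_of_nonneg _ _ hq0.le, ← ENNReal.rpow_mul,
          one_div_mul_cancel hq0.ne', ENNReal.rpow_one]
    _ ≤ C₂ ^ q * C₁ := by
        rw [ENNReal.tsum_mul_left]
        exact mul_le_mul_right (hC₁ f hf) _
    _ = (C₂ ^ q * C₁ : ℝ≥0) := by
        rw [ENNReal.coe_mul, ENNReal.coe_rpow_of_nonneg _ hq0.le]

lemma exists_tsum_dyadicPotential_rpow_rpow_le (hp : 1 < p) (hpq : p < q)
    (hB : ∀ k, #(B k) = 2 ^ k) :
    ∃ C : ℝ≥0, 0 < C ∧ ∀ f : G → ℝ≥0∞,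
      (∑' j, dyadicPotential (1 - 1 / p + 1 / q) B f j ^ q) ^ (1 / q) ≤
        C * (∑' m, f m ^ p) ^ (1 / p) := by
  have hp0 : 0 < p := by linarith
  have hq0 : 0 < q := by linarith
  obtain ⟨C, hC⟩ := exists_tsum_dyadicPotential_rpow_le hp hpq hB
  refine ⟨(C + 1) ^ (1 / q), by positivity, fun f => ?_⟩
  set t := (∑' m, f m ^ p) ^ (1 / p) with ht
  have t_rpow : t ^ p = ∑' m, f m ^ p := by
    rw [ht, ← ENNReal.rpow_mul, one_div_mul_cancel hp0.ne', ENNReal.rpow_one]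
  rcases eq_or_ne t 0 with ht0 | ht0
  · have f_eq_zero (m : G) : f m = 0 := by
      have tsum_eq_zero : ∑' m, f m ^ p = 0 := by
        rw [← t_rpow, ht0, ENNReal.zero_rpow_of_pos hp0]
      exact (ENNReal.rpow_eq_zero_iff_of_pos hp0).1 (ENNReal.tsum_eq_zero.1 tsum_eq_zero m)
    simp [f_eq_zero, dyadicPotential, windowSum, hq0]
  rcases eq_or_ne t ∞ with ht' | ht'
  · rw [ht', ENNReal.mul_top]
    · exact le_top
    · exact ENNReal.coe_ne_zero.2 (by positivity)
  have normalized : ∑' m, (t⁻¹ * f m) ^ p ≤ 1 := by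
    simp only [ENNReal.mul_rpow_of_nonneg _ _ hp0.le, ENNReal.tsum_mul_left, ← t_rpow]
    rw [ENNReal.inv_rpow, ENNReal.inv_mul_cancel] <;> simp [hp0, ht0, ht']
  have f_eq : f = fun m => t * (t⁻¹ * f m) := by
    ext m
    rw [ENNReal.mul_inv_cancel_left ht0 ht']
  calc (∑' j, dyadicPotential (1 - 1 / p + 1 / q) B f j ^ q) ^ (1 / q)
      = t * (∑' j, dyadicPotential (1 - 1 / p + 1 / q) B (fun m => t⁻¹ * f m) j ^ q) ^ (1 / q) := by
        conv_lhs => rw [f_eq]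
        simp only [dyadicPotential_const_mul _ _ t, ENNReal.mul_rpow_of_nonneg _ _ hq0.le]
        rw [ENNReal.tsum_mul_left, ENNReal.mul_rpow_of_nonneg _ _ (by positivity),
          ← ENNReal.rpow_mul, mul_one_div_cancel hq0.ne', ENNReal.rpow_one]
    _ ≤ t * (C + 1 : ℝ≥0) ^ (1 / q) := by
        gcongr
        exact (hC _ normalized).trans (by simp)
    _ = ((C + 1) ^ (1 / q) : ℝ≥0) * t := by
        rw [mul_comm, ENNReal.coe_rpow_of_nonneg _ (by positivity)]

end DyadicPotential

lemma tsum_mul_le_dyadicPotential {G : Type*} [AddCommGroup G] {B : ℕ → Finset G} {l : ℝ}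
    {w : G → ℝ≥0∞} {A : ℝ≥0∞} (hw : ∀ n, ∃ k, n ∈ B k ∧ w n ≤ A * (2 ^ k) ^ (-l))
    (f : G → ℝ≥0∞) (j : G) :
    ∑' m, w (j - m) * f m ≤ A * dyadicPotential l B f j := by
  have le_tsum_indicator (n : G) : w n * f (j - n) ≤
      ∑' k, A * (2 ^ k) ^ (-l) * (B k : Set G).indicator (fun n => f (j - n)) n := by
    obtain ⟨k, hnk, hwn⟩ := hw n
    refine le_trans ?_ (ENNReal.le_tsum k)
    rw [Set.indicator_of_mem (Finset.mem_coe.2 hnk)]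
    gcongr
  calc ∑' m, w (j - m) * f m = ∑' n, w n * f (j - n) := by
        rw [← (Equiv.subLeft j).tsum_eq]
        simp
    _ ≤ ∑' n, ∑' k, A * (2 ^ k) ^ (-l) * (B k : Set G).indicator (fun n => f (j - n)) n :=
        ENNReal.tsum_le_tsum le_tsum_indicator
    _ = A * dyadicPotential l B f j := by
        rw [ENNReal.tsum_comm, dyadicPotential, ← ENNReal.tsum_mul_left]
        refine tsum_congr fun k => ?_
        rw [ENNReal.tsum_mul_left, windowSum, sum_eq_tsum_indicator, mul_assoc]

section EnormSums

variable {ι κ E : Type*} [NormedAddCommGroup E]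

lemma toReal_tsum_enorm_rpow {p : ℝ} (hp : 0 ≤ p) (g : ι → E) :
    (∑' j, ‖g j‖ₑ ^ p).toReal = ∑' j, ‖g j‖ ^ p := by
  rw [ENNReal.tsum_toReal_eq fun j => ENNReal.rpow_ne_top_of_nonneg hp enorm_ne_top]
  simp only [← ENNReal.toReal_rpow, toReal_enorm]

lemma tsum_enorm_rpow_ne_top {p : ℝ} (hp : 0 ≤ p) {g : ι → E}
    (hg : Summable fun j => ‖g j‖ ^ p) : ∑' j, ‖g j‖ₑ ^ p ≠ ∞ := by
  have enorm_rpow_eq (j : ι) : ‖g j‖ₑ ^ p = ENNReal.ofReal (‖g j‖ ^ p) := by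
    rw [← ofReal_norm, ENNReal.ofReal_rpow_of_nonneg (norm_nonneg _) hp]
  simp only [enorm_rpow_eq]
  exact hg.tsum_ofReal_ne_top

lemma summable_norm_of_tsum_tsum_enorm_rpow_ne_top {q : ℝ} (hq : 0 < q) {F : ι → κ → E}
    (hF : ∑' j, (∑' m, ‖F j m‖ₑ) ^ q ≠ ∞) (j : ι) : Summable fun m => ‖F j m‖ :=
  tsum_enorm_ne_top_iff_summable_norm.1
    ((ENNReal.rpow_lt_top_iff_of_pos hq).1 (ENNReal.lt_top_of_tsum_ne_top hF j)).ne

lemma tsum_norm_tsum_rpow_le {q : ℝ} (hq : 0 ≤ q) {F : ι → κ → E}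
    (hF : ∑' j, (∑' m, ‖F j m‖ₑ) ^ q ≠ ∞) :
    ∑' j, ‖∑' m, F j m‖ ^ q ≤ (∑' j, (∑' m, ‖F j m‖ₑ) ^ q).toReal := by
  rw [← toReal_tsum_enorm_rpow hq]
  refine ENNReal.toReal_mono hF (ENNReal.tsum_le_tsum fun j => ?_)
  exact ENNReal.rpow_le_rpow enorm_tsum_le_tsum_enorm hq

end EnormSums

/-- An interval of `2 ^ k` consecutive integers which is centered at `0` up to rounding. -/
noncomputable def centeredInterval (k : ℕ) : Finset ℤ :=
  Finset.Ico (-(2 ^ k / 2)) (2 ^ k - 2 ^ k / 2)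

lemma card_centeredInterval (k : ℕ) : #(centeredInterval k) = 2 ^ k := by
  rw [centeredInterval, Int.card_Ico, sub_neg_eq_add, sub_add_cancel,
    Int.toNat_pow_of_nonneg zero_le_two]
  rfl

lemma exists_mem_centeredInterval_two_pow_le (n : ℤ) :
    ∃ k, n ∈ centeredInterval k ∧ 2 ^ k ≤ 4 * (n.natAbs + 1) := by
  let i := Nat.log 2 (n.natAbs + 1)
  have two_pow_le : 2 ^ i ≤ n.natAbs + 1 := Nat.pow_log_le_self 2 (by omega)
  have lt_two_pow : n.natAbs + 1 < 2 ^ (i + 1) := Nat.lt_pow_succ_log_self one_lt_two _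
  refine ⟨i + 2, ?_, by rw [pow_add]; omega⟩
  have lt_two_pow' : (n.natAbs : ℤ) + 1 < 2 ^ (i + 1) := mod_cast lt_two_pow
  rw [centeredInterval, Finset.mem_Ico]
  rw [pow_succ] at lt_two_pow' ⊢
  rw [pow_succ]
  omega

lemma Gamma_add_le_rpow_mul_Gamma_s4 {x a : ℝ} (hx : 0 < x) (ha : 0 ≤ a) (ha1 : a ≤ 1) :
    Real.Gamma (x + a) ≤ x ^ a * Real.Gamma x := by
  rcases ha.eq_or_lt with rfl | ha
  · simp
  rcases ha1.eq_or_lt with rfl | ha1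
  · rw [Real.Gamma_add_one hx.ne', Real.rpow_one]
  have Gamma_pos := Real.Gamma_pos_of_pos hx
  calc Real.Gamma (x + a) = Real.Gamma ((1 - a) * x + a * (x + 1)) := by ring_nf
    _ ≤ Real.Gamma x ^ (1 - a) * Real.Gamma (x + 1) ^ a :=
        Real.Gamma_mul_add_mul_le_rpow_Gamma_mul_rpow_Gamma hx (by linarith) (by linarith) ha
          (by ring)
    _ = x ^ a * (Real.Gamma x ^ (1 - a) * Real.Gamma x ^ a) := by
        rw [Real.Gamma_add_one hx.ne', Real.mul_rpow hx.le Gamma_pos.le, mul_left_comm]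
    _ = x ^ a * Real.Gamma x := by
        rw [← Real.rpow_add Gamma_pos, sub_add_cancel, Real.rpow_one]

lemma Gamma_add_div_Gamma_add_one_sub_le {s x : ℝ} (hs0 : 0 < s) (hs1 : s ≤ 1 / 2)
    (hx : 0 ≤ x) :
    Real.Gamma (x + s) / Real.Gamma (x + 1 - s) ≤ 1 / s * (x + 1) ^ (2 * s - 1) := by
  have y_pos : 0 < x + 1 - s := by linarith
  have Gamma_pos := Real.Gamma_pos_of_pos y_pos
  have mul_le : (x + s) * Real.Gamma (x + s) ≤ (x + 1) ^ (2 * s) * Real.Gamma (x + 1 - s) :=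
    calc (x + s) * Real.Gamma (x + s) = Real.Gamma (x + 1 - s + 2 * s) := by
          rw [← Real.Gamma_add_one (by linarith)]
          ring_nf
      _ ≤ (x + 1 - s) ^ (2 * s) * Real.Gamma (x + 1 - s) :=
          Gamma_add_le_rpow_mul_Gamma_s4 y_pos (by linarith) (by linarith)
      _ ≤ (x + 1) ^ (2 * s) * Real.Gamma (x + 1 - s) := by
          gcongr
          linarith
  rw [div_le_iff₀ Gamma_pos, Real.rpow_sub_one (by linarith)]
  calc Real.Gamma (x + s)
      ≤ (x + 1) ^ (2 * s) * Real.Gamma (x + 1 - s) / (x + s) := by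
        rwa [le_div_iff₀' (by linarith)]
    _ ≤ (x + 1) ^ (2 * s) * Real.Gamma (x + 1 - s) / (s * (x + 1)) := by
        gcongr
        nlinarith
    _ = _ := by field_simp

lemma exists_abs_Knsh_le {s : ℝ} (hs0 : 0 < s) (hs1 : s < 1 / 2) :
    ∃ D : ℝ, 0 < D ∧ ∀ h : ℝ, 0 < h → ∀ n : ℤ,
      |Knsh h s n| ≤ D * h ^ (2 * s) * (|(n : ℝ)| + 1) ^ (2 * s - 1) := by
  set c := (4 : ℝ) ^ (-s) * Real.Gamma (1 / 2 - s) / (Real.sqrt Real.pi * Real.Gamma s) with hc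
  have : 0 < c := by
    have := Real.Gamma_pos_of_pos hs0
    have := Real.Gamma_pos_of_pos (sub_pos.2 hs1)
    positivity
  refine ⟨c * (1 / s), by positivity, fun h hh n => ?_⟩
  have hn : 0 ≤ |(n : ℝ)| := abs_nonneg _
  have Gamma_ratio_nonneg : 0 ≤ Real.Gamma (|(n : ℝ)| + s) / Real.Gamma (|(n : ℝ)| + 1 - s) :=
    div_nonneg (Real.Gamma_nonneg_of_nonneg (by linarith))
      (Real.Gamma_nonneg_of_nonneg (by linarith))
  rw [Knsh, ← hc, mul_div_assoc, abs_of_nonneg (by positivity)]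
  calc c * (h ^ (2 * s) * (Real.Gamma (|(n : ℝ)| + s) / Real.Gamma (|(n : ℝ)| + 1 - s)))
      ≤ c * (h ^ (2 * s) * (1 / s * (|(n : ℝ)| + 1) ^ (2 * s - 1))) := by
        gcongr
        exact Gamma_add_div_Gamma_add_one_sub_le hs0 hs1.le hn
    _ = _ := by ring

lemma exists_mem_centeredInterval_enorm_Knsh_le {s l : ℝ} (hs0 : 0 < s) (hs1 : s < 1 / 2)
    (hl : 2 * s - 1 ≤ -l) :
    ∃ D : ℝ, 0 < D ∧ ∀ h : ℝ, 0 < h → ∀ n : ℤ, ∃ k, n ∈ centeredInterval k ∧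
      ‖Knsh h s n‖ₑ ≤ ENNReal.ofReal (D * h ^ (2 * s)) * (2 ^ k) ^ (-l) := by
  obtain ⟨D, hD, abs_Knsh_le⟩ := exists_abs_Knsh_le hs0 hs1
  refine ⟨D * (1 / 4) ^ (2 * s - 1), by positivity, fun h hh n => ?_⟩
  obtain ⟨k, hk, two_pow_le⟩ := exists_mem_centeredInterval_two_pow_le n
  have two_pow_div_four_le : 1 / 4 * (2 : ℝ) ^ k ≤ |(n : ℝ)| + 1 := by
    rw [← Int.cast_abs, ← Nat.cast_natAbs]
    have : (2 : ℝ) ^ k ≤ 4 * (n.natAbs + 1) := mod_cast two_pow_le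
    linarith
  refine ⟨k, hk, ?_⟩
  rw [← ENNReal.ofReal_ofNat, ← ENNReal.ofReal_pow zero_le_two,
    ENNReal.ofReal_rpow_of_pos (by positivity), ← ENNReal.ofReal_mul (by positivity),
    Real.enorm_eq_ofReal_abs]
  refine ENNReal.ofReal_le_ofReal ?_
  calc |Knsh h s n| ≤ D * h ^ (2 * s) * (|(n : ℝ)| + 1) ^ (2 * s - 1) := abs_Knsh_le h hh n
    _ ≤ D * h ^ (2 * s) * (1 / 4 * 2 ^ k) ^ (2 * s - 1) := by
        gcongr D * h ^ (2 * s) * ?_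
        exact Real.rpow_le_rpow_of_nonpos (by positivity) two_pow_div_four_le (by linarith)
    _ ≤ D * h ^ (2 * s) * ((1 / 4) ^ (2 * s - 1) * (2 ^ k) ^ (-l)) := by
        rw [Real.mul_rpow (by norm_num) (by positivity)]
        gcongr
        exact one_le_pow₀ one_le_two
    _ = D * (1 / 4) ^ (2 * s - 1) * h ^ (2 * s) * (2 ^ k) ^ (-l) := by ring

lemma exists_tsum_tsum_enorm_Knsh_mul_rpow_rpow_le {s p q : ℝ} (hs0 : 0 < s) (hs1 : s < 1 / 2)
    (hp : 1 < p) (hpq : p < q) (hq : 1 / q ≤ 1 / p - 2 * s) :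
    ∃ C : ℝ, 0 < C ∧ ∀ h : ℝ, 0 < h → ∀ f : ℤ → ℝ,
      (∑' j, (∑' m, ‖Knsh h s (j - m) * f m‖ₑ) ^ q) ^ (1 / q) ≤
        ENNReal.ofReal (C * h ^ (2 * s)) * (∑' m, ‖f m‖ₑ ^ p) ^ (1 / p) := by
  have hq0 : 0 < q := by linarith
  obtain ⟨D, hD, Knsh_le⟩ := exists_mem_centeredInterval_enorm_Knsh_le hs0 hs1
    (show 2 * s - 1 ≤ -(1 - 1 / p + 1 / q) by linarith)
  obtain ⟨C, hC, potential_le⟩ :=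
    exists_tsum_dyadicPotential_rpow_rpow_le hp hpq card_centeredInterval
  refine ⟨D * C, by positivity, fun h hh f => ?_⟩
  let V := dyadicPotential (1 - 1 / p + 1 / q) centeredInterval fun m => ‖f m‖ₑ
  have tsum_le (j : ℤ) : ∑' m, ‖Knsh h s (j - m) * f m‖ₑ ≤
      ENNReal.ofReal (D * h ^ (2 * s)) * V j := by
    simp only [enorm_mul]
    exact tsum_mul_le_dyadicPotential (Knsh_le h hh) _ j
  calc (∑' j, (∑' m, ‖Knsh h s (j - m) * f m‖ₑ) ^ q) ^ (1 / q)
      ≤ (∑' j, (ENNReal.ofReal (D * h ^ (2 * s)) * V j) ^ q) ^ (1 / q) := by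
        gcongr with j
        exact tsum_le j
    _ = ENNReal.ofReal (D * h ^ (2 * s)) * (∑' j, V j ^ q) ^ (1 / q) := by
        simp only [ENNReal.mul_rpow_of_nonneg _ _ hq0.le, ENNReal.tsum_mul_left]
        rw [ENNReal.mul_rpow_of_nonneg _ _ (by positivity), ← ENNReal.rpow_mul,
          mul_one_div_cancel hq0.ne', ENNReal.rpow_one]
    _ ≤ ENNReal.ofReal (D * h ^ (2 * s)) * (C * (∑' m, ‖f m‖ₑ ^ p) ^ (1 / p)) := by
        gcongr
        exact potential_le _
    _ = ENNReal.ofReal (D * C * h ^ (2 * s)) * (∑' m, ‖f m‖ₑ ^ p) ^ (1 / p) := by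
        rw [← mul_assoc, ← ENNReal.ofReal_coe_nnreal, ← ENNReal.ofReal_mul (by positivity),
          mul_right_comm]

lemma mul_rpow_le_div_rpow_mul_mul_rpow {s p q C h X Y : ℝ} (hh : 0 < h) (hX : 0 ≤ X) (hY : 0 ≤ Y)
    (hXY : Y ^ (1 / q) ≤ C * h ^ (2 * s) * X ^ (1 / p)) :
    (h * Y) ^ (1 / q) ≤ C / h ^ (1 / p - 2 * s - 1 / q) * (h * X) ^ (1 / p) := by
  have rpow_split : h ^ (1 / p) = h ^ (1 / q) * h ^ (2 * s) * h ^ (1 / p - 2 * s - 1 / q) := by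
    rw [← Real.rpow_add hh, ← Real.rpow_add hh]
    ring_nf
  have : 0 < h ^ (1 / p - 2 * s - 1 / q) := Real.rpow_pos_of_pos hh _
  calc (h * Y) ^ (1 / q) = h ^ (1 / q) * Y ^ (1 / q) := Real.mul_rpow hh.le hY
    _ ≤ h ^ (1 / q) * (C * h ^ (2 * s) * X ^ (1 / p)) := by gcongr
    _ = C / h ^ (1 / p - 2 * s - 1 / q) * (h * X) ^ (1 / p) := by
        rw [Real.mul_rpow hh.le hX, rpow_split]
        field_simp

/-- Discrete Hardy–Littlewood–Sobolev inequality. -/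
theorem discrete_HLS (s p q : ℝ) (hs0 : 0 < s) (hs1 : s < 1/2)
    (hp : 1 < p) (hpq : p < q) (hq : 1/q ≤ 1/p - 2 * s) :
    ∃ C : ℝ, 0 < C ∧ ∀ h : ℝ, 0 < h → ∀ f : ℤ → ℝ,
      (Summable fun j : ℤ => |f j| ^ p) →
      (∀ j : ℤ, Summable fun m : ℤ => |Knsh h s (j - m) * f m|) ∧
      (h * ∑' j : ℤ, |fracInt h s f j| ^ q) ^ (1/q) ≤
        C / h ^ (1/p - 2 * s - 1/q) * (h * ∑' j : ℤ, |f j| ^ p) ^ (1/p) := by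
  have hp0 : 0 < p := by linarith
  have hq0 : 0 < q := by linarith
  obtain ⟨C, hC, tsum_le⟩ := exists_tsum_tsum_enorm_Knsh_mul_rpow_rpow_le hs0 hs1 hp hpq hq
  refine ⟨C, hC, fun h hh f hf => ?_⟩
  set T := ∑' j, (∑' m, ‖Knsh h s (j - m) * f m‖ₑ) ^ q
  have rhs_ne_top : ENNReal.ofReal (C * h ^ (2 * s)) * (∑' m, ‖f m‖ₑ ^ p) ^ (1 / p) ≠ ∞ :=
    ENNReal.mul_ne_top ENNReal.ofReal_ne_top
      (ENNReal.rpow_ne_top_of_nonneg (by positivity) (tsum_enorm_rpow_ne_top hp0.le hf))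
  have T_ne_top : T ≠ ∞ := ((ENNReal.rpow_lt_top_iff_of_pos (one_div_pos.2 hq0)).1
    ((tsum_le h hh f).trans_lt rhs_ne_top.lt_top)).ne
  refine ⟨summable_norm_of_tsum_tsum_enorm_rpow_ne_top hq0 T_ne_top, ?_⟩
  refine mul_rpow_le_div_rpow_mul_mul_rpow hh (by positivity) (by positivity) ?_
  calc (∑' j, |fracInt h s f j| ^ q) ^ (1 / q) ≤ T.toReal ^ (1 / q) := by
        gcongr
        exact tsum_norm_tsum_rpow_le hq0.le T_ne_top
    _ ≤ C * h ^ (2 * s) * (∑' j, |f j| ^ p) ^ (1 / p) := by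
        rw [ENNReal.toReal_rpow]
        refine (ENNReal.toReal_mono rhs_ne_top (tsum_le h hh f)).trans_eq ?_
        rw [ENNReal.toReal_mul, ENNReal.toReal_ofReal (by positivity), ← ENNReal.toReal_rpow,
          toReal_tsum_enorm_rpow hp0.le]
        rfl
end

section
/- (Discrete Schauder estimates.) Let h>0, k≥0 an integer, 0<α≤1, 0<s<1/2, and let f:ℤ→ℝ satisfy Σ_{m∈ℤ}|f_m|/(1+|m|)^{1−2s} < ∞. (i) If [f]_{C_h^{k,α}} < ∞ and 2s+α<1, then [(-Δ_h)^{-s} f]_{C_h^{k,α+2s}} ≤ C·[f]_{C_h^{k,α}}. (ii) If [f]_{C_h^{k,α}} < ∞ and 2s+α>1, then [(-Δ_h)^{-s} f]_{C_h^{k+1,α+2s−1}} ≤ C·[f]_{C_h^{k,α}}. (iii) If f is bounded, then [(-Δ_h)^{-s} f]_{C_h^{0,2s}} ≤ C·sup_j|f_j|. In all cases the constant C>0 depends only on s, α and k, and is independent of h and f. -/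
/-- Forward discrete derivative `D_+ u_j = (u_{j+1} - u_j)/h`. -/
noncomputable def Dp (h : ℝ) (u : ℤ → ℝ) : ℤ → ℝ := fun j => (u (j + 1) - u j) / h

/-- Backward discrete derivative `D_- u_j = (u_j - u_{j-1})/h`. -/
noncomputable def Dm (h : ℝ) (u : ℤ → ℝ) : ℤ → ℝ := fun j => (u j - u (j - 1)) / h

/-- Discrete Hölder seminorm `[u]_{C_h^{0,β}}`, valued in `ℝ≥0∞`. -/
noncomputable def hsemi (h β : ℝ) (u : ℤ → ℝ) : ENNReal :=
  ⨆ (j : ℤ) (m : ℤ) (_ : j ≠ m),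
    ENNReal.ofReal (|u j - u m| / (h * |((j - m : ℤ) : ℝ)|) ^ β)

/-- Discrete Hölder seminorm of order `k`. -/
noncomputable def ksemi (h : ℝ) (k : ℕ) (β : ℝ) (u : ℤ → ℝ) : ENNReal :=
  ∑ γ ∈ Finset.range (k + 1), hsemi h β ((Dp h)^[γ] ((Dm h)^[k - γ] u))

/-!
The kernel `K` of `(-Δ_h)^{-s}` decays like `|m|^{2s-1}`, and each discrete difference gains one
more power of decay. Let `T` be convolution with a kernel `L` of homogeneity `-a`. Since `L` tends
to `0`, the sum of `L (n + R) - L n` over `n` vanishes, and therefore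
`T g j - T g (j + R) = ∑ₙ (L n - L (n + R)) (g (j - n) - g j)`.
For `|n| > 2R` the difference of `L` gives a convergent tail. For `|n| ≤ 2R` the two kernels are
estimated separately by size; the shifted one is singular at the other base point, so `g` is
recentered there, at the cost of a sum of `L` over a translated block. Both parts are
`O(R^(α + 1 - a))` when `g` is `α`-Hölder and `α < a < α + 1`. Differences commute with `T`, so
everything reduces to Hölder estimates of order zero: with `L = K` and `a = 1 - 2s` when
`α + 2s < 1`, and with `L = D₊ K` and `a = 2 - 2s` when `α + 2s > 1`. A bounded function is the case
`α = 0` of the former.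
-/

open Filter Topology SummationFilter

/-! ### Sums of powers -/

lemma one_sub_mul_le_one_add_rpow_neg {t p : ℝ} (ht : -1 < t) (hp : 0 ≤ p) :
    1 - p * t ≤ (1 + t) ^ (-p) := by
  have hlog : Real.log (1 + t) ≤ t := by
    linarith [Real.log_le_sub_one_of_pos (by linarith : 0 < 1 + t)]
  calc 1 - p * t ≤ 1 - p * Real.log (1 + t) := by gcongr
    _ ≤ Real.exp (-(p * Real.log (1 + t))) := Real.one_sub_le_exp_neg _
    _ = (1 + t) ^ (-p) := by rw [Real.rpow_def_of_pos (by linarith)]; ring_nf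

lemma one_add_abs_sub_rpow_neg_le {q : ℝ} (hq : 0 ≤ q) (x y : ℝ) :
    (1 + |x - y|) ^ (-q) ≤ (1 + |x|) ^ q * (1 + |y|) ^ (-q) := by
  have hxy : 1 + |y| ≤ (1 + |x|) * (1 + |x - y|) := by
    have : |y| ≤ |x| + |x - y| := by simpa using abs_sub x (x - y)
    nlinarith [mul_nonneg (abs_nonneg x) (abs_nonneg (x - y))]
  rw [Real.rpow_neg (by positivity), Real.rpow_neg (by positivity), ← div_eq_mul_inv,
    le_div_iff₀ (by positivity), inv_mul_le_iff₀ (by positivity),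
    ← Real.mul_rpow (by positivity) (by positivity), mul_comm]
  gcongr

lemma rpow_add_mul_rpow_sub_one_le {β x : ℝ} (hβ : 0 ≤ β) (hβ1 : β ≤ 1) (hx : 0 ≤ x) :
    x ^ β + β * (1 + x) ^ (β - 1) ≤ (1 + x) ^ β := by
  have hx1 : 0 < 1 + x := by positivity
  have bernoulli : (x / (1 + x)) ^ β ≤ 1 - β / (1 + x) := by
    have hinv : -1 ≤ -(1 / (1 + x)) := by
      rw [neg_le_neg_iff, div_le_one hx1]; linarith
    convert rpow_one_add_le_one_add_mul_self hinv hβ hβ1 using 2 <;> field_simp <;> ring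
  rw [Real.div_rpow hx hx1.le, div_le_iff₀ (by positivity)] at bernoulli
  rw [Real.rpow_sub_one hx1.ne']
  linear_combination bernoulli

lemma rpow_neg_add_mul_rpow_sub_one_le {p x : ℝ} (hp : 0 ≤ p) (hx : 0 < x) :
    (1 + x) ^ (-p) + p * (1 + x) ^ (-p - 1) ≤ x ^ (-p) := by
  have hx1 : 0 < 1 + x := by positivity
  have bernoulli : 1 + p / (1 + x) ≤ (x / (1 + x)) ^ (-p) := by
    have hinv : -1 < -(1 / (1 + x)) := by
      rw [neg_lt_neg_iff, div_lt_one hx1]; linarith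
    convert one_sub_mul_le_one_add_rpow_neg hinv hp using 2 <;> field_simp <;> ring
  rw [Real.div_rpow hx.le hx1.le, le_div_iff₀ (by positivity)] at bernoulli
  rw [Real.rpow_sub_one hx1.ne']
  linear_combination bernoulli

lemma sum_range_one_add_rpow_le {β : ℝ} (hβ : 0 < β) (hβ1 : β ≤ 1) (N : ℕ) :
    ∑ n ∈ Finset.range N, (1 + (n : ℝ)) ^ (β - 1) ≤ (N : ℝ) ^ β / β := by
  rw [le_div_iff₀ hβ]
  induction N with
  | zero => simp [hβ.ne']
  | succ N ih =>
    rw [Finset.sum_range_succ, Nat.cast_succ, add_comm (N : ℝ) 1]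
    linarith [rpow_add_mul_rpow_sub_one_le hβ.le hβ1 N.cast_nonneg]

lemma sum_Ico_one_add_rpow_le {p : ℝ} (hp : 0 < p) {N M : ℕ} (hN : 0 < N) (hNM : N ≤ M) :
    ∑ n ∈ Finset.Ico N M, (1 + (n : ℝ)) ^ (-p - 1) ≤ (N : ℝ) ^ (-p) / p := by
  suffices (∑ n ∈ Finset.Ico N M, (1 + (n : ℝ)) ^ (-p - 1)) * p ≤
      (N : ℝ) ^ (-p) - (M : ℝ) ^ (-p) by
    rw [le_div_iff₀ hp]
    linarith [Real.rpow_nonneg M.cast_nonneg (-p)]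
  induction M, hNM using Nat.le_induction with
  | base => simp
  | succ M hM ih =>
    rw [Finset.sum_Ico_succ_top hM, Nat.cast_succ, add_comm (M : ℝ) 1]
    have hM0 : (0 : ℝ) < M := by exact_mod_cast hN.trans_le hM
    linarith [rpow_neg_add_mul_rpow_sub_one_le hp.le hM0]

lemma even_one_add_abs_rpow (q : ℝ) : Function.Even fun n : ℤ => (1 + |(n : ℝ)|) ^ q :=
  fun n => by simp

lemma sum_Icc_one_add_abs_rpow_le {β : ℝ} (hβ : 0 < β) (hβ1 : β ≤ 1) (N : ℕ) :
    ∑ n ∈ Finset.Icc (-N : ℤ) N, (1 + |(n : ℝ)|) ^ (β - 1) ≤ 2 * ((N + 1 : ℝ) ^ β / β) := by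
  rw [Finset.sum_Icc_of_even_eq_range (even_one_add_abs_rpow _), two_nsmul]
  have := sum_range_one_add_rpow_le hβ hβ1 (N + 1)
  simp only [Int.cast_natCast, Nat.abs_cast, Int.cast_zero, abs_zero, add_zero, Real.one_rpow]
  push_cast at this
  linarith

lemma sum_one_add_abs_rpow_le_of_subset {β : ℝ} (hβ : 0 < β) (hβ1 : β ≤ 1) {R : ℕ} (hR : 1 ≤ R)
    {u : Finset ℤ} (hu : u ⊆ Finset.Icc (-(3 * R) : ℤ) (3 * R)) :
    ∑ n ∈ u, (1 + |(n : ℝ)|) ^ (β - 1) ≤ 8 / β * (R : ℝ) ^ β := by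
  have hRone : (1 : ℝ) ≤ R := by exact_mod_cast hR
  calc ∑ n ∈ u, (1 + |(n : ℝ)|) ^ (β - 1)
      ≤ ∑ n ∈ Finset.Icc (-(3 * R : ℕ) : ℤ) (3 * R : ℕ), (1 + |(n : ℝ)|) ^ (β - 1) :=
        Finset.sum_le_sum_of_subset_of_nonneg (by exact_mod_cast hu) fun _ _ _ => by positivity
    _ ≤ 2 * (((3 * R : ℕ) + 1 : ℝ) ^ β / β) := sum_Icc_one_add_abs_rpow_le hβ hβ1 _
    _ ≤ 2 * ((4 * R) ^ β / β) := by
        gcongr; push_cast; linarith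
    _ ≤ 2 * (4 * (R : ℝ) ^ β / β) := by
        rw [Real.mul_rpow (by norm_num) (by positivity)]
        gcongr
        exact Real.rpow_le_self_of_one_le (by norm_num) hβ1
    _ = 8 / β * (R : ℝ) ^ β := by ring

lemma sum_Icc_sdiff_one_add_abs_rpow_le {p : ℝ} (hp : 0 < p) {N M : ℕ} (hNM : N ≤ M) :
    ∑ n ∈ Finset.Icc (-M : ℤ) M \ Finset.Icc (-N : ℤ) N, (1 + |(n : ℝ)|) ^ (-p - 1) ≤
      2 * ((N + 1 : ℝ) ^ (-p) / p) := by
  have hsub : Finset.Icc (-N : ℤ) N ⊆ Finset.Icc (-M : ℤ) M :=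
    Finset.Icc_subset_Icc (by omega) (by omega)
  have htail := sum_Ico_one_add_rpow_le hp N.succ_pos (Nat.succ_le_succ hNM)
  rw [Finset.sum_Ico_eq_sub _ (Nat.succ_le_succ hNM)] at htail
  rw [Finset.sum_sdiff_eq_sub hsub, Finset.sum_Icc_of_even_eq_range (even_one_add_abs_rpow _),
    Finset.sum_Icc_of_even_eq_range (even_one_add_abs_rpow _), two_nsmul, two_nsmul]
  simp only [Int.cast_natCast, Nat.abs_cast]
  push_cast at htail
  linarith

/-! ### Translated sums over the integers -/

lemma sum_Icc_int_sub {G : Type*} [AddCommGroup G] (f : ℤ → G) {p q : ℤ} (hpq : p ≤ q) :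
    ∑ m ∈ Finset.Icc p q, (f (m + 1) - f m) = f (q + 1) - f p := by
  induction q, hpq using Int.leInduction with
  | base => simp
  | succ q hq ih =>
    rw [← Finset.insert_Icc_right_eq_Icc_add_one (by omega), Finset.sum_insert (by simp), ih]
    abel

lemma sum_Icc_int_add_right {M : Type*} [AddCommMonoid M] (f : ℤ → M) (p q r : ℤ) :
    ∑ m ∈ Finset.Icc p q, f (m + r) = ∑ m ∈ Finset.Icc (p + r) (q + r), f m := by
  rw [← Finset.map_add_right_Icc, Finset.sum_map]
  rfl

lemma hasSum_symmetricIcc_translate_sub {G : Type*} [AddCommGroup G] [TopologicalSpace G]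
    [IsTopologicalAddGroup G] {f : ℤ → G} (hf : Tendsto f cofinite (𝓝 0)) (R : ℕ) :
    HasSum (fun m => f (m + R) - f m) 0 (symmetricIcc ℤ) := by
  have hstep {u : ℤ → G} (hu : Tendsto u cofinite (𝓝 0)) :
      HasSum (fun m => u (m + 1) - u m) 0 (symmetricIcc ℤ) := by
    rw [Int.cofinite_eq, tendsto_sup] at hu
    rw [hasSum_symmetricIcc_iff]
    have htop : Tendsto (fun N : ℕ => u (N + 1)) atTop (𝓝 0) :=
      hu.2.comp (tendsto_atTop_add_const_right _ 1 tendsto_natCast_atTop_atTop)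
    have hbot : Tendsto (fun N : ℕ => u (-N)) atTop (𝓝 0) :=
      hu.1.comp (tendsto_neg_atTop_atBot.comp tendsto_natCast_atTop_atTop)
    simpa only [sub_zero, sum_Icc_int_sub u (neg_le_self (Int.natCast_nonneg _))] using
      htop.sub hbot
  induction R with
  | zero => simp
  | succ R ih =>
    have htranslate : Tendsto (fun m : ℤ => f (m + R)) cofinite (𝓝 0) :=
      hf.comp (add_left_injective (R : ℤ)).tendsto_cofinite
    convert (hstep htranslate).add ih using 2 with m
    · push_cast; rw [sub_add_sub_cancel, add_right_comm, add_assoc]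
    · simp

/-! ### Convolution with singular kernels -/

/-- The convolution `j ↦ ∑ₘ L (j - m) g m` on `ℤ`, of which `(-Δ_h)^{-s}` is the case
`L = K_{-s}^h`. Meaningful when `Convolvable L g`, since `tsum` is `0` otherwise. -/
noncomputable def discreteConv (L g : ℤ → ℝ) (j : ℤ) : ℝ :=
  ∑' m, L (j - m) * g m

/-- The series defining `discreteConv L g` converges (absolutely) at every point. -/
def Convolvable (L g : ℤ → ℝ) : Prop :=
  ∀ j, Summable fun m => L (j - m) * g m

/-- Calderón–Zygmund type bounds for a kernel on `ℤ` of homogeneity `-a` with constant `C`.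
The block `[-R, 3R]` in `cancel` is `[-2R, 2R]` translated by `R`: only such sums arise when a
convolution is compared at two points at distance `R`. -/
structure IsSingularKernel (a C : ℝ) (L : ℤ → ℝ) : Prop where
  size (m : ℤ) : |L m| ≤ C * (1 + |(m : ℝ)|) ^ (-a)
  smooth (m : ℤ) : |L (m + 1) - L m| ≤ C * (1 + |(m : ℝ)|) ^ (-a - 1)
  cancel (R : ℕ) : 1 ≤ R → |∑ m ∈ Finset.Icc (-R : ℤ) (3 * R), L m| ≤ C * (R : ℝ) ^ (1 - a)

/-- The operator norm bound for convolution with a kernel of homogeneity `-a`, as a map from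
`C^{0,α}` to `C^{0,α+1-a}`: near and far parts of the convolution sum contribute one term each. -/
noncomputable def holderConst (a α : ℝ) : ℝ :=
  16 / (α + 1 - a) + 1 + 2 ^ (a + 2) / (a - α)

lemma holderConst_pos {a α : ℝ} (hαa : α < a) (haα : a < α + 1) : 0 < holderConst a α := by
  have hnear : 0 < α + 1 - a := by linarith
  have hfar : 0 < a - α := by linarith
  exact add_pos (add_pos (div_pos (by norm_num) hnear) one_pos) (div_pos (by positivity) hfar)

namespace Convolvable

variable {L g : ℤ → ℝ}

lemma hasSum (hg : Convolvable L g) (j : ℤ) :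
    HasSum (fun m => L (j - m) * g m) (discreteConv L g j) :=
  (hg j).hasSum

lemma hasSum_reflect (hg : Convolvable L g) (j : ℤ) :
    HasSum (fun n => L n * g (j - n)) (discreteConv L g j) := by
  rw [← (Equiv.subLeft j).hasSum_iff]
  simpa [Function.comp_def] using hg.hasSum j

lemma hasSum_translate (hg : Convolvable L g) (i j : ℤ) :
    HasSum (fun m => L (j - m) * g (m + i)) (discreteConv L g (j + i)) := by
  rw [← (Equiv.subRight i).hasSum_iff]
  simpa [Function.comp_def, sub_sub_eq_add_sub] using hg.hasSum (j + i)

lemma hasSum_Dp (hg : Convolvable L g) (h : ℝ) (j : ℤ) :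
    HasSum (fun m => L (j - m) * Dp h g m) (Dp h (discreteConv L g) j) := by
  simpa only [Dp, ← mul_div_assoc, mul_sub] using
    ((hg.hasSum_translate 1 j).sub (hg.hasSum j)).div_const h

lemma hasSum_Dm (hg : Convolvable L g) (h : ℝ) (j : ℤ) :
    HasSum (fun m => L (j - m) * Dm h g m) (Dm h (discreteConv L g) j) := by
  simpa only [Dm, ← mul_div_assoc, mul_sub, ← sub_eq_add_neg] using
    ((hg.hasSum j).sub (hg.hasSum_translate (-1) j)).div_const h

lemma hasSum_Dp_kernel (hg : Convolvable L g) (h : ℝ) (j : ℤ) :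
    HasSum (fun m => Dp h L (j - m) * g m) (Dp h (discreteConv L g) j) := by
  simpa only [Dp, div_mul_eq_mul_div, sub_mul, sub_add_eq_add_sub] using
    ((hg.hasSum (j + 1)).sub (hg.hasSum j)).div_const h

lemma iterate {D : (ℤ → ℝ) → ℤ → ℝ}
    (hD : ∀ u, Convolvable L u → ∀ j,
      HasSum (fun m => L (j - m) * D u m) (D (discreteConv L u) j))
    (hg : Convolvable L g) (n : ℕ) :
    Convolvable L (D^[n] g) ∧ discreteConv L (D^[n] g) = D^[n] (discreteConv L g) := by
  induction n with
  | zero => exact ⟨hg, rfl⟩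
  | succ n ih =>
    simp only [Function.iterate_succ_apply', ← ih.2]
    exact ⟨fun j => (hD _ ih.1 j).summable, funext fun j => (hD _ ih.1 j).tsum_eq⟩

end Convolvable

namespace IsSingularKernel

variable {a C : ℝ} {L : ℤ → ℝ}

lemma const_nonneg (hL : IsSingularKernel a C L) : 0 ≤ C := by
  simpa using (abs_nonneg _).trans (hL.size 0)

lemma of_lt_one (ha0 : 0 ≤ a) (ha1 : a < 1)
    (size : ∀ m : ℤ, |L m| ≤ C * (1 + |(m : ℝ)|) ^ (-a))
    (smooth : ∀ m : ℤ, |L (m + 1) - L m| ≤ C * (1 + |(m : ℝ)|) ^ (-a - 1)) :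
    IsSingularKernel a (8 / (1 - a) * C) L := by
  have hC : 0 ≤ C := by simpa using (abs_nonneg _).trans (size 0)
  have hle : C ≤ 8 / (1 - a) * C :=
    le_mul_of_one_le_left hC ((one_le_div (by linarith)).mpr (by linarith))
  refine ⟨fun m => (size m).trans (by gcongr), fun m => (smooth m).trans (by gcongr),
    fun R hR => ?_⟩
  have hsum := sum_one_add_abs_rpow_le_of_subset (β := 1 - a) (by linarith) (by linarith) hR
    (u := Finset.Icc (-R) (3 * R)) (Finset.Icc_subset_Icc (by omega) le_rfl)
  rw [sub_sub_cancel_left] at hsum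
  calc |∑ m ∈ Finset.Icc (-R : ℤ) (3 * R), L m|
      ≤ ∑ m ∈ Finset.Icc (-R : ℤ) (3 * R), C * (1 + |(m : ℝ)|) ^ (-a) :=
        (Finset.abs_sum_le_sum_abs _ _).trans (Finset.sum_le_sum fun m _ => size m)
    _ ≤ C * (8 / (1 - a) * (R : ℝ) ^ (1 - a)) := by rw [← Finset.mul_sum]; gcongr
    _ = 8 / (1 - a) * C * (R : ℝ) ^ (1 - a) := by ring

lemma succ_sub (ha : 0 ≤ a)
    (size : ∀ m : ℤ, |L m| ≤ C * (1 + |(m : ℝ)|) ^ (-a))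
    (smooth : ∀ m : ℤ, |L (m + 1) - L m| ≤ C * (1 + |(m : ℝ)|) ^ (-a - 1))
    (smooth₂ : ∀ m : ℤ, |(L (m + 1 + 1) - L (m + 1)) - (L (m + 1) - L m)| ≤
      C * (1 + |(m : ℝ)|) ^ (-a - 1 - 1)) :
    IsSingularKernel (a + 1) (2 * C) fun m => L (m + 1) - L m := by
  have hC : 0 ≤ C := by simpa using (abs_nonneg _).trans (size 0)
  have hle : C ≤ 2 * C := by linarith
  refine ⟨fun m => ?_, fun m => ?_, fun R hR => ?_⟩
  · rw [neg_add']
    exact (smooth m).trans (by gcongr)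
  · rw [neg_add']
    exact (smooth₂ m).trans (by gcongr)
  have hRpos : (0 : ℝ) < R := by exact_mod_cast hR
  have endpoint_le {m : ℤ} (hm : (R : ℤ) ≤ |m|) : |L m| ≤ C * (R : ℝ) ^ (-a) := by
    have hm' : (R : ℝ) ≤ |(m : ℝ)| := by exact_mod_cast hm
    refine (size m).trans (mul_le_mul_of_nonneg_left ?_ hC)
    exact Real.rpow_le_rpow_of_nonpos hRpos (by linarith) (by linarith)
  have hright : |L (3 * R + 1)| ≤ C * (R : ℝ) ^ (-a) :=
    endpoint_le ((by omega : (R : ℤ) ≤ 3 * R + 1).trans (le_abs_self _))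
  have hleft : |L (-R)| ≤ C * (R : ℝ) ^ (-a) := endpoint_le (by simp)
  rw [sum_Icc_int_sub L (by omega), sub_add_cancel_right]
  linear_combination abs_sub (L (3 * R + 1)) (L (-R)) + hright + hleft

lemma const_mul (hL : IsSingularKernel a C L) {c : ℝ} (hc : 0 ≤ c) :
    IsSingularKernel a (C * c) fun m => c * L m where
  size m := by
    rw [abs_mul, abs_of_nonneg hc, mul_comm C, mul_assoc]
    gcongr
    exact hL.size m
  smooth m := by
    rw [← mul_sub, abs_mul, abs_of_nonneg hc, mul_comm C, mul_assoc]
    gcongr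
    exact hL.smooth m
  cancel R hR := by
    rw [← Finset.mul_sum, abs_mul, abs_of_nonneg hc, mul_comm C, mul_assoc]
    gcongr
    exact hL.cancel R hR

lemma convolvable {g : ℤ → ℝ} (hL : IsSingularKernel a C L)
    (ha : 0 ≤ a) (hg : Summable fun m : ℤ => |g m| / (1 + |(m : ℝ)|) ^ a) : Convolvable L g := by
  intro j
  refine (hg.mul_left (C * (1 + |(j : ℝ)|) ^ a)).of_norm_bounded fun m => ?_
  have hC := hL.const_nonneg
  calc ‖L (j - m) * g m‖ = |L (j - m)| * |g m| := by rw [Real.norm_eq_abs, abs_mul]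
    _ ≤ C * (1 + |(j - m : ℝ)|) ^ (-a) * |g m| := by
        gcongr; exact_mod_cast hL.size (j - m)
    _ ≤ C * ((1 + |(j : ℝ)|) ^ a * (1 + |(m : ℝ)|) ^ (-a)) * |g m| := by
        gcongr; exact one_add_abs_sub_rpow_neg_le ha _ _
    _ = C * (1 + |(j : ℝ)|) ^ a * (|g m| / (1 + |(m : ℝ)|) ^ a) := by
        rw [Real.rpow_neg (by positivity)]; ring

lemma tendsto_cofinite (hL : IsSingularKernel a C L) (ha : 0 < a) :
    Tendsto L cofinite (𝓝 0) := by
  have habs : Tendsto (fun m : ℤ => 1 + |(m : ℝ)|) cofinite atTop := by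
    rw [Int.cofinite_eq]
    refine tendsto_atTop_add_const_left _ 1 (Tendsto.sup ?_ ?_)
    · exact tendsto_abs_atBot_atTop.comp (tendsto_intCast_atBot_iff.mpr tendsto_id)
    · exact tendsto_abs_atTop_atTop.comp tendsto_intCast_atTop_atTop
  refine squeeze_zero_norm hL.size ?_
  simpa using ((tendsto_rpow_neg_atTop ha).comp habs).const_mul C

lemma abs_translate_sub_le (hL : IsSingularKernel a C L) (ha : 0 ≤ a) {R : ℕ} {n : ℤ}
    (hn : 2 * (R : ℝ) ≤ |(n : ℝ)|) :
    |L (n + R) - L n| ≤ 2 ^ (a + 1) * C * R * (1 + |(n : ℝ)|) ^ (-a - 1) := by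
  have hC := hL.const_nonneg
  have step_le (i : ℕ) (hi : i < R) :
      |L (n + (i + 1 : ℕ)) - L (n + i)| ≤ 2 ^ (a + 1) * C * (1 + |(n : ℝ)|) ^ (-a - 1) := by
    have hhalf : (1 + |(n : ℝ)|) / 2 ≤ 1 + |((n + i : ℤ) : ℝ)| := by
      have hi' : (i : ℝ) ≤ R := by exact_mod_cast hi.le
      have := abs_sub_abs_le_abs_sub (n : ℝ) (-i)
      rw [abs_neg, Nat.abs_cast, sub_neg_eq_add] at this
      push_cast
      linarith
    calc |L (n + (i + 1 : ℕ)) - L (n + i)|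
        ≤ C * (1 + |((n + i : ℤ) : ℝ)|) ^ (-a - 1) := by
          simpa [add_assoc] using hL.smooth (n + i)
      _ ≤ C * ((1 + |(n : ℝ)|) / 2) ^ (-a - 1) := by
          gcongr C * ?_
          exact Real.rpow_le_rpow_of_nonpos (by positivity) hhalf (by linarith)
      _ = 2 ^ (a + 1) * C * (1 + |(n : ℝ)|) ^ (-a - 1) := by
          rw [Real.div_rpow (by positivity) zero_le_two, div_eq_mul_inv,
            ← Real.rpow_neg zero_le_two]
          ring_nf
  calc |L (n + R) - L n|
      = |∑ i ∈ Finset.range R, (L (n + (i + 1 : ℕ)) - L (n + i))| := by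
        rw [Finset.sum_range_sub fun i : ℕ => L (n + i)]; simp
    _ ≤ ∑ i ∈ Finset.range R, |L (n + (i + 1 : ℕ)) - L (n + i)| := Finset.abs_sum_le_sum_abs _ _
    _ ≤ ∑ _i ∈ Finset.range R, 2 ^ (a + 1) * C * (1 + |(n : ℝ)|) ^ (-a - 1) :=
        Finset.sum_le_sum fun i hi => step_le i (Finset.mem_range.mp hi)
    _ = 2 ^ (a + 1) * C * R * (1 + |(n : ℝ)|) ^ (-a - 1) := by
        rw [Finset.sum_const, Finset.card_range, nsmul_eq_mul]; ring

section HolderEstimate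

variable {α B : ℝ} {φ : ℤ → ℝ}

lemma abs_sum_mul_le (hL : IsSingularKernel a C L) (hα : 0 ≤ α) (hαa : α < a) (haα : a < α + 1)
    (hφ : ∀ n : ℤ, |φ n| ≤ B * |(n : ℝ)| ^ α) {R : ℕ} (hR : 1 ≤ R) {u : Finset ℤ}
    (hu : u ⊆ Finset.Icc (-(3 * R) : ℤ) (3 * R)) :
    |∑ n ∈ u, L n * φ n| ≤ 8 / (α + 1 - a) * (C * B * (R : ℝ) ^ (α + 1 - a)) := by
  have hC := hL.const_nonneg
  have hB : 0 ≤ B := by simpa using (abs_nonneg _).trans (hφ 1)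
  have term_le (n : ℤ) : |L n * φ n| ≤ C * B * (1 + |(n : ℝ)|) ^ (α + 1 - a - 1) :=
    calc |L n * φ n| ≤ (C * (1 + |(n : ℝ)|) ^ (-a)) * (B * (1 + |(n : ℝ)|) ^ α) := by
          rw [abs_mul]
          gcongr
          · exact hL.size n
          · exact (hφ n).trans (by gcongr; linarith)
      _ = C * B * (1 + |(n : ℝ)|) ^ (α + 1 - a - 1) := by
          rw [show α + 1 - a - 1 = -a + α by ring, Real.rpow_add (by positivity)]; ring
  calc |∑ n ∈ u, L n * φ n| ≤ ∑ n ∈ u, |L n * φ n| := Finset.abs_sum_le_sum_abs _ _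
    _ ≤ ∑ n ∈ u, C * B * (1 + |(n : ℝ)|) ^ (α + 1 - a - 1) :=
        Finset.sum_le_sum fun n _ => term_le n
    _ ≤ C * B * (8 / (α + 1 - a) * (R : ℝ) ^ (α + 1 - a)) := by
        rw [← Finset.mul_sum]
        gcongr
        exact sum_one_add_abs_rpow_le_of_subset (by linarith) (by linarith) hR hu
    _ = 8 / (α + 1 - a) * (C * B * (R : ℝ) ^ (α + 1 - a)) := by ring

-- The translated kernel is singular at `-R`, so there `φ` is recentered at `φ (-R)`.
lemma sum_Icc_sub_translate_mul (L φ : ℤ → ℝ) (R : ℤ) :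
    ∑ n ∈ Finset.Icc (-(2 * R)) (2 * R), (L n - L (n + R)) * φ n =
      ∑ n ∈ Finset.Icc (-(2 * R)) (2 * R), L n * φ n -
        ∑ n ∈ Finset.Icc (-R) (3 * R), L n * (φ (n - R) - φ (-R)) -
        φ (-R) * ∑ n ∈ Finset.Icc (-R) (3 * R), L n := by
  have translate_sum (F : ℤ → ℝ) : ∑ n ∈ Finset.Icc (-(2 * R)) (2 * R), F (n + R) =
      ∑ n ∈ Finset.Icc (-R) (3 * R), F n := by
    rw [sum_Icc_int_add_right]; ring_nf
  rw [← translate_sum, ← translate_sum, Finset.mul_sum, ← Finset.sum_sub_distrib,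
    ← Finset.sum_sub_distrib]
  exact Finset.sum_congr rfl fun n _ => by rw [add_sub_cancel_right]; ring

lemma abs_sum_Icc_sub_translate_mul_le (hL : IsSingularKernel a C L) (hα : 0 ≤ α) (hαa : α < a)
    (haα : a < α + 1) (hφ0 : φ 0 = 0) (hφ : ∀ m n : ℤ, |φ m - φ n| ≤ B * |((m - n : ℤ) : ℝ)| ^ α)
    {R : ℕ} (hR : 1 ≤ R) :
    |∑ n ∈ Finset.Icc (-(2 * R) : ℤ) (2 * R), (L n - L (n + R)) * φ n| ≤
      (16 / (α + 1 - a) + 1) * (C * B * (R : ℝ) ^ (α + 1 - a)) := by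
  have := hL.const_nonneg
  have hRpos : (0 : ℝ) < R := by exact_mod_cast hR
  have hφ_abs (n : ℤ) : |φ n| ≤ B * |(n : ℝ)| ^ α := by simpa [hφ0] using hφ n 0
  have hB : 0 ≤ B := by simpa using (abs_nonneg _).trans (hφ_abs 1)
  have hcenter : |φ (-R) * ∑ n ∈ Finset.Icc (-R : ℤ) (3 * R), L n| ≤
      C * B * (R : ℝ) ^ (α + 1 - a) :=
    calc |φ (-R) * ∑ n ∈ Finset.Icc (-R : ℤ) (3 * R), L n|
        ≤ (B * (R : ℝ) ^ α) * (C * (R : ℝ) ^ (1 - a)) := by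
          rw [abs_mul]
          gcongr
          · simpa using hφ_abs (-R)
          · exact hL.cancel R hR
      _ = C * B * (R : ℝ) ^ (α + 1 - a) := by
          rw [add_sub_assoc, Real.rpow_add hRpos]; ring
  have hnear := hL.abs_sum_mul_le hα hαa haα hφ_abs hR
    (u := Finset.Icc (-(2 * R)) (2 * R)) (Finset.Icc_subset_Icc (by omega) (by omega))
  have hshifted := hL.abs_sum_mul_le hα hαa haα (φ := fun n => φ (n - R) - φ (-R))
    (fun n => by simpa using hφ (n - R) (-R)) hR
      (u := Finset.Icc (-R) (3 * R)) (Finset.Icc_subset_Icc (by omega) le_rfl)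
  rw [sum_Icc_sub_translate_mul]
  refine (abs_sub _ _).trans ((add_le_add_left (abs_sub _ _) _).trans ?_)
  linear_combination hnear + hshifted + hcenter

lemma abs_sub_translate_mul_le (hL : IsSingularKernel a C L) (ha : 0 ≤ a) (hα : 0 ≤ α)
    (hφ : ∀ n : ℤ, |φ n| ≤ B * |(n : ℝ)| ^ α) {R : ℕ} {n : ℤ} (hn : 2 * (R : ℝ) ≤ |(n : ℝ)|) :
    |(L n - L (n + R)) * φ n| ≤
      2 ^ (a + 1) * C * R * B * (1 + |(n : ℝ)|) ^ (-(a - α) - 1) := by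
  have hC := hL.const_nonneg
  have hB : 0 ≤ B := by simpa using (abs_nonneg _).trans (hφ 1)
  calc |(L n - L (n + R)) * φ n|
      ≤ (2 ^ (a + 1) * C * R * (1 + |(n : ℝ)|) ^ (-a - 1)) * (B * (1 + |(n : ℝ)|) ^ α) := by
        rw [abs_mul, abs_sub_comm]
        gcongr
        · exact hL.abs_translate_sub_le ha hn
        · exact (hφ n).trans (by gcongr; linarith)
    _ = 2 ^ (a + 1) * C * R * B * (1 + |(n : ℝ)|) ^ (-(a - α) - 1) := by
        rw [show -(a - α) - 1 = -a - 1 + α by ring, Real.rpow_add (x := 1 + |(n : ℝ)|)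
          (by positivity)]
        ring

lemma abs_sum_sdiff_sub_translate_mul_le (hL : IsSingularKernel a C L) (hα : 0 ≤ α) (hαa : α < a)
    (haα : a < α + 1) (hφ : ∀ n : ℤ, |φ n| ≤ B * |(n : ℝ)| ^ α) {R M : ℕ} (hR : 1 ≤ R)
    (hM : 2 * R ≤ M) :
    |∑ n ∈ Finset.Icc (-M : ℤ) M \ Finset.Icc (-(2 * R) : ℤ) (2 * R), (L n - L (n + R)) * φ n| ≤
      2 ^ (a + 2) / (a - α) * (C * B * (R : ℝ) ^ (α + 1 - a)) := by
  have hC := hL.const_nonneg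
  have hB : 0 ≤ B := by simpa using (abs_nonneg _).trans (hφ 1)
  have hRpos : (0 : ℝ) < R := by exact_mod_cast hR
  have hp : 0 < a - α := by linarith
  have htail := sum_Icc_sdiff_one_add_abs_rpow_le hp hM
  push_cast at htail
  calc _ ≤ ∑ n ∈ Finset.Icc (-M : ℤ) M \ Finset.Icc (-(2 * R) : ℤ) (2 * R),
            2 ^ (a + 1) * C * R * B * (1 + |(n : ℝ)|) ^ (-(a - α) - 1) := by
        refine (Finset.abs_sum_le_sum_abs _ _).trans (Finset.sum_le_sum fun n hn =>
          hL.abs_sub_translate_mul_le (hα.trans hαa.le) hα hφ ?_)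
        have hnR : 2 * (R : ℤ) < |n| := by
          rw [Finset.mem_sdiff, Finset.mem_Icc (a := -(2 * R : ℤ)), ← abs_le] at hn
          exact not_le.mp hn.2
        exact_mod_cast hnR.le
    _ ≤ 2 ^ (a + 1) * C * R * B * (2 * ((2 * R + 1 : ℝ) ^ (-(a - α)) / (a - α))) := by
        rw [← Finset.mul_sum]; gcongr
    _ ≤ 2 ^ (a + 1) * C * R * B * (2 * ((R : ℝ) ^ (-(a - α)) / (a - α))) := by
        gcongr 2 ^ (a + 1) * C * R * B * (2 * (?_ / _))
        exact Real.rpow_le_rpow_of_nonpos hRpos (by linarith) (by linarith)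
    _ = 2 ^ (a + 2) / (a - α) * (C * B * (R : ℝ) ^ (α + 1 - a)) := by
        rw [show α + 1 - a = 1 + -(a - α) by ring, Real.rpow_add hRpos, Real.rpow_one,
          show a + 2 = a + 1 + 1 by ring, Real.rpow_add_one two_ne_zero (a + 1)]
        ring

lemma hasSum_discreteConv_sub_translate {g : ℤ → ℝ} (hL : IsSingularKernel a C L) (ha : 0 < a)
    (hg : Convolvable L g) (j : ℤ) (R : ℕ) :
    HasSum (fun n => (L n - L (n + R)) * (g (j - n) - g j))
      (discreteConv L g j - discreteConv L g (j + R)) (symmetricIcc ℤ) := by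
  have htranslate : HasSum (fun n => L (n + R) * g (j - n)) (discreteConv L g (j + R)) := by
    rw [← (Equiv.subRight (R : ℤ)).hasSum_iff]
    convert hg.hasSum_reflect (j + R) using 2 with n
    simp [add_sub_right_comm, sub_sub_eq_add_sub]
  have hconv : HasSum (fun n => L n * g (j - n) - L (n + R) * g (j - n))
      (discreteConv L g j - discreteConv L g (j + R)) (symmetricIcc ℤ) :=
    ((hg.hasSum_reflect j).sub htranslate).mono_left (symmetricIcc ℤ).le_atTop
  convert hconv.add
    ((hasSum_symmetricIcc_translate_sub (hL.tendsto_cofinite ha) R).mul_right (g j)) using 2 with n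
  · ring
  · simp

lemma abs_discreteConv_sub_translate_le {g : ℤ → ℝ} (hL : IsSingularKernel a C L) (hα : 0 ≤ α)
    (hαa : α < a) (haα : a < α + 1) (hg : Convolvable L g)
    (hgB : ∀ m n : ℤ, |g m - g n| ≤ B * |((m - n : ℤ) : ℝ)| ^ α) (j : ℤ) {R : ℕ} (hR : 1 ≤ R) :
    |discreteConv L g j - discreteConv L g (j + R)| ≤
      holderConst a α * (C * B * (R : ℝ) ^ (α + 1 - a)) := by
  set φ : ℤ → ℝ := fun n => g (j - n) - g j
  have hφ (m n : ℤ) : |φ m - φ n| ≤ B * |((m - n : ℤ) : ℝ)| ^ α := by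
    simpa [φ, abs_sub_comm] using hgB (j - m) (j - n)
  have hφ0 : φ 0 = 0 := by simp [φ]
  have hlim := hL.hasSum_discreteConv_sub_translate (hα.trans_lt hαa) hg j R
  rw [hasSum_symmetricIcc_iff] at hlim
  refine le_of_tendsto hlim.abs ?_
  filter_upwards [eventually_ge_atTop (2 * R)] with M hM
  have hsub : Finset.Icc (-(2 * R) : ℤ) (2 * R) ⊆ Finset.Icc (-M : ℤ) M :=
    Finset.Icc_subset_Icc (by omega) (by omega)
  rw [← Finset.sum_sdiff hsub]
  have hfar := hL.abs_sum_sdiff_sub_translate_mul_le hα hαa haα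
    (fun n => by simpa [hφ0] using hφ n 0) hR hM
  have hnear := hL.abs_sum_Icc_sub_translate_mul_le hα hαa haα hφ0 hφ hR
  refine (abs_add_le _ _).trans ?_
  rw [holderConst]
  linear_combination hfar + hnear

end HolderEstimate

end IsSingularKernel

/-! ### Discrete Hölder seminorms -/

lemma hsemi_le_ofReal_iff {h β A : ℝ} {u : ℤ → ℝ} (hh : 0 < h) (hA : 0 ≤ A) :
    hsemi h β u ≤ ENNReal.ofReal A ↔
      ∀ j m : ℤ, |u j - u m| ≤ A * (h * |((j - m : ℤ) : ℝ)|) ^ β := by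
  simp only [hsemi, iSup_le_iff, ENNReal.ofReal_le_ofReal_iff hA]
  refine forall₂_congr fun j m => ?_
  rcases eq_or_ne j m with rfl | hjm
  · simpa using by positivity
  · have : ((j - m : ℤ) : ℝ) ≠ 0 := by exact_mod_cast sub_ne_zero.mpr hjm
    rw [div_le_iff₀ (by positivity)]
    simp [hjm]

lemma hsemi_discreteConv_le {a α C h : ℝ} {L g : ℤ → ℝ} (hα : 0 ≤ α) (hαa : α < a)
    (haα : a < α + 1) (hC : 0 < C) (hh : 0 < h) (hL : IsSingularKernel a (C * h ^ (1 - a)) L)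
    (hg : Convolvable L g) :
    hsemi h (α + 1 - a) (discreteConv L g) ≤
      ENNReal.ofReal (holderConst a α * C) * hsemi h α g := by
  have hconst : 0 < holderConst a α * C := mul_pos (holderConst_pos hαa haα) hC
  rcases eq_or_ne (hsemi h α g) ⊤ with htop | htop
  · rw [htop, ENNReal.mul_top (ENNReal.ofReal_pos.mpr hconst).ne']
    exact le_top
  obtain ⟨A, hA, hgA⟩ : ∃ A : ℝ, 0 ≤ A ∧ hsemi h α g = ENNReal.ofReal A :=
    ⟨_, ENNReal.toReal_nonneg, (ENNReal.ofReal_toReal htop).symm⟩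
  have holder : ∀ m n : ℤ, |g m - g n| ≤ A * h ^ α * |((m - n : ℤ) : ℝ)| ^ α := by
    simpa only [Real.mul_rpow hh.le (abs_nonneg _), mul_assoc] using
      (hsemi_le_ofReal_iff hh hA).mp hgA.le
  rw [hgA, ← ENNReal.ofReal_mul hconst.le, hsemi_le_ofReal_iff hh (by positivity)]
  intro j m
  wlog hjm : j < m generalizing j m
  · rcases (not_lt.mp hjm).eq_or_lt with rfl | hmj
    · simpa using by positivity
    · simpa [abs_sub_comm] using this m j hmj
  obtain ⟨R, rfl⟩ : ∃ R : ℕ, m = j + R := ⟨(m - j).toNat, by omega⟩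
  calc |discreteConv L g j - discreteConv L g (j + R)|
      ≤ holderConst a α * (C * h ^ (1 - a) * (A * h ^ α) * (R : ℝ) ^ (α + 1 - a)) :=
        hL.abs_discreteConv_sub_translate_le hα hαa haα hg holder j (by omega)
    _ = holderConst a α * C * A * (h * R) ^ (α + 1 - a) := by
        rw [Real.mul_rpow hh.le R.cast_nonneg, add_sub_assoc, Real.rpow_add hh]; ring
    _ = holderConst a α * C * A * (h * |((j - (j + R) : ℤ) : ℝ)|) ^ (α + 1 - a) := by simp

lemma ksemi_discreteConv_le {a α C h : ℝ} {L g : ℤ → ℝ} (hα : 0 ≤ α) (hαa : α < a)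
    (haα : a < α + 1) (hC : 0 < C) (hh : 0 < h) (hL : IsSingularKernel a (C * h ^ (1 - a)) L)
    (hg : Convolvable L g) (k : ℕ) :
    ksemi h k (α + 1 - a) (discreteConv L g) ≤
      ENNReal.ofReal (holderConst a α * C) * ksemi h k α g := by
  rw [ksemi, ksemi, Finset.mul_sum]
  refine Finset.sum_le_sum fun γ _ => ?_
  obtain ⟨hDm, hDm_conv⟩ := hg.iterate (fun _ hu => hu.hasSum_Dm h) (k - γ)
  obtain ⟨hDp, hDp_conv⟩ := hDm.iterate (fun _ hu => hu.hasSum_Dp h) γ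
  rw [← hDm_conv, ← hDp_conv]
  exact hsemi_discreteConv_le hα hαa haα hC hh hL hDp

lemma hsemi_Dm_le_hsemi_Dp (h β : ℝ) (u : ℤ → ℝ) : hsemi h β (Dm h u) ≤ hsemi h β (Dp h u) := by
  have hDm (j : ℤ) : Dm h u j = Dp h u (j - 1) := by simp [Dm, Dp]
  refine iSup₂_le fun j m => iSup_le fun hjm => ?_
  rw [hDm, hDm, ← sub_sub_sub_cancel_right j m 1]
  exact le_iSup₂_of_le (j - 1) (m - 1) (le_iSup_of_le (by simpa using hjm) le_rfl)

lemma commute_Dp_Dm (h : ℝ) : Function.Commute (Dp h) (Dm h) := fun u => by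
  ext j
  simp only [Dp, Dm, add_sub_cancel_right, sub_add_cancel]

lemma ksemi_succ_le (h : ℝ) (k : ℕ) (β : ℝ) (u : ℤ → ℝ) :
    ksemi h (k + 1) β u ≤ 2 * ksemi h k β (Dp h u) := by
  have hforward : ∑ γ ∈ Finset.range (k + 1), hsemi h β ((Dp h)^[γ + 1] ((Dm h)^[k - γ] u)) =
      ksemi h k β (Dp h u) := by
    refine Finset.sum_congr rfl fun γ _ => ?_
    rw [Function.iterate_succ_apply, ((commute_Dp_Dm h).iterate_right _).eq]
  have hbackward : hsemi h β ((Dm h)^[k + 1] u) ≤ ksemi h k β (Dp h u) :=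
    calc hsemi h β ((Dm h)^[k + 1] u) = hsemi h β (Dm h ((Dm h)^[k] u)) := by
          rw [Function.iterate_succ_apply']
      _ ≤ hsemi h β (Dp h ((Dm h)^[k] u)) := hsemi_Dm_le_hsemi_Dp ..
      _ = hsemi h β ((Dm h)^[k] (Dp h u)) := by rw [((commute_Dp_Dm h).iterate_right k).eq]
      _ ≤ ksemi h k β (Dp h u) := by
          rw [ksemi, Finset.sum_range_succ']; exact le_add_self
  rw [ksemi, Finset.sum_range_succ', two_mul]
  simp only [Nat.add_sub_add_right, hforward]
  gcongr
  exact hbackward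

/-! ### The kernel of the fractional integral -/

lemma Knsh_neg (h s : ℝ) (m : ℤ) : Knsh h s (-m) = Knsh h s m := by
  simp [Knsh]

lemma Knsh_eq_rpow_mul (h s : ℝ) (m : ℤ) : Knsh h s m = h ^ (2 * s) * Knsh 1 s m := by
  rw [Knsh, Knsh, Real.one_rpow]; ring

lemma Dp_Knsh {h : ℝ} (hh : 0 < h) (s : ℝ) :
    Dp h (Knsh h s) = fun m => h ^ (2 * s - 1) * (Knsh 1 s (m + 1) - Knsh 1 s m) := by
  ext m
  rw [Dp, Knsh_eq_rpow_mul, Knsh_eq_rpow_mul h s m, Real.rpow_sub_one hh.ne']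
  ring

section KernelDecay

variable {s : ℝ}

lemma Knsh_one_natCast_pos (hs0 : 0 < s) (hs1 : s < 1 / 2) (n : ℕ) : 0 < Knsh 1 s n := by
  have : (0 : ℝ) ≤ n := n.cast_nonneg
  have := Real.Gamma_pos_of_pos hs0
  have := Real.Gamma_pos_of_pos (sub_pos.mpr hs1)
  have := Real.Gamma_pos_of_pos (by linarith : 0 < (n : ℝ) + s)
  have := Real.Gamma_pos_of_pos (by linarith : 0 < (n : ℝ) + 1 - s)
  rw [Knsh, Int.cast_natCast, Nat.abs_cast]
  positivity

lemma Knsh_one_natCast_succ (hs0 : 0 < s) (hs1 : s < 1 / 2) (n : ℕ) :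
    Knsh 1 s (n + 1) = Knsh 1 s n * (1 - (1 - 2 * s) / (n + 1 - s)) := by
  have : (0 : ℝ) ≤ n := n.cast_nonneg
  have hden : (n : ℝ) + 1 - s ≠ 0 := by linarith
  have hGamma := (Real.Gamma_pos_of_pos (by linarith : 0 < (n : ℝ) + 1 - s)).ne'
  have hnum : Real.Gamma ((n + 1 : ℕ) + s) = (n + s) * Real.Gamma (n + s) := by
    rw [← Real.Gamma_add_one (by linarith)]; push_cast; ring_nf
  have hdenom : Real.Gamma ((n + 1 : ℕ) + 1 - s) = (n + 1 - s) * Real.Gamma (n + 1 - s) := by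
    rw [← Real.Gamma_add_one hden]; push_cast; ring_nf
  rw [← Nat.cast_succ, Knsh, Knsh, Int.cast_natCast, Int.cast_natCast, Nat.abs_cast, Nat.abs_cast,
    hnum, hdenom]
  field_simp
  ring

lemma Knsh_one_natCast_le (hs0 : 0 < s) (hs1 : s < 1 / 2) (n : ℕ) :
    Knsh 1 s n ≤ Knsh 1 s 0 * (1 + (n : ℝ)) ^ (-(1 - 2 * s)) := by
  induction n with
  | zero => simp
  | succ n ih =>
    have hpos := Knsh_one_natCast_pos hs0 hs1
    have : (0 : ℝ) ≤ n := n.cast_nonneg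
    have hinv : 0 < 1 / (1 + (n : ℝ)) := by positivity
    have ratio_le : 1 - (1 - 2 * s) / (n + 1 - s) ≤ (1 + 1 / (1 + (n : ℝ))) ^ (-(1 - 2 * s)) :=
      calc 1 - (1 - 2 * s) / (n + 1 - s) ≤ 1 - (1 - 2 * s) / (1 + n) := by
            gcongr <;> linarith
        _ = 1 - (1 - 2 * s) * (1 / (1 + n)) := by ring
        _ ≤ (1 + 1 / (1 + (n : ℝ))) ^ (-(1 - 2 * s)) :=
            one_sub_mul_le_one_add_rpow_neg (by linarith) (by linarith)
    calc Knsh 1 s (n + 1 : ℕ) = Knsh 1 s n * (1 - (1 - 2 * s) / (n + 1 - s)) := by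
          exact_mod_cast Knsh_one_natCast_succ hs0 hs1 n
      _ ≤ Knsh 1 s n * (1 + 1 / (1 + (n : ℝ))) ^ (-(1 - 2 * s)) := by
          gcongr; exact (hpos n).le
      _ ≤ Knsh 1 s 0 * (1 + (n : ℝ)) ^ (-(1 - 2 * s)) *
            (1 + 1 / (1 + (n : ℝ))) ^ (-(1 - 2 * s)) := by gcongr
      _ = Knsh 1 s 0 * (1 + ((n + 1 : ℕ) : ℝ)) ^ (-(1 - 2 * s)) := by
          rw [mul_assoc, ← Real.mul_rpow (by positivity) (by positivity)]
          congr 2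
          push_cast
          field_simp
          ring

lemma one_div_natCast_add_one_sub_le (hs1 : s < 1 / 2) (n : ℕ) :
    1 / ((n : ℝ) + 1 - s) ≤ 2 * (1 + (n : ℝ))⁻¹ := by
  have : (0 : ℝ) ≤ n := n.cast_nonneg
  rw [← div_eq_mul_inv, div_le_div_iff₀ (by linarith) (by linarith)]
  linarith

lemma abs_Knsh_one_natCast_succ_sub_le (hs0 : 0 < s) (hs1 : s < 1 / 2) (n : ℕ) :
    |Knsh 1 s (n + 1) - Knsh 1 s n| ≤
      2 * (1 - 2 * s) * Knsh 1 s 0 * (1 + (n : ℝ)) ^ (-(1 - 2 * s) - 1) := by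
  have hpos := Knsh_one_natCast_pos hs0 hs1 n
  have hK := Knsh_one_natCast_le hs0 hs1 n
  have : (0 : ℝ) ≤ n := n.cast_nonneg
  have hs : 0 < 1 - 2 * s := by linarith
  have hden : 0 < (n : ℝ) + 1 - s := by linarith
  calc |Knsh 1 s (n + 1) - Knsh 1 s n|
      = |-((1 - 2 * s) * (Knsh 1 s n * (1 / (n + 1 - s))))| := by
        rw [Knsh_one_natCast_succ hs0 hs1]; ring_nf
    _ = (1 - 2 * s) * (Knsh 1 s n * (1 / (n + 1 - s))) := by
        rw [abs_neg, abs_of_pos (by positivity)]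
    _ ≤ (1 - 2 * s) * (Knsh 1 s 0 * (1 + (n : ℝ)) ^ (-(1 - 2 * s)) * (2 * (1 + (n : ℝ))⁻¹)) := by
        gcongr
        · exact hpos.le.trans hK
        · exact one_div_natCast_add_one_sub_le hs1 n
    _ = 2 * (1 - 2 * s) * Knsh 1 s 0 * (1 + (n : ℝ)) ^ (-(1 - 2 * s) - 1) := by
        rw [Real.rpow_sub_one (by positivity)]; ring

lemma abs_Knsh_one_natCast_second_difference_le (hs0 : 0 < s) (hs1 : s < 1 / 2) (n : ℕ) :
    |(Knsh 1 s (n + 1 + 1) - Knsh 1 s (n + 1)) - (Knsh 1 s (n + 1) - Knsh 1 s n)| ≤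
      4 * (1 - 2 * s) * (2 - 2 * s) * Knsh 1 s 0 * (1 + (n : ℝ)) ^ (-(1 - 2 * s) - 1 - 1) := by
  have hpos := Knsh_one_natCast_pos hs0 hs1 n
  have hK := Knsh_one_natCast_le hs0 hs1 n
  have : (0 : ℝ) ≤ n := n.cast_nonneg
  have hs : 0 < 1 - 2 * s := by linarith
  have hs' : 0 < 2 - 2 * s := by linarith
  have hden : 0 < (n : ℝ) + 1 - s := by linarith
  have hden' : 0 < (n : ℝ) + 1 + 1 - s := by linarith
  have hsucc : Knsh 1 s (n + 1 + 1) = Knsh 1 s (n + 1) * (1 - (1 - 2 * s) / (n + 1 + 1 - s)) := by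
    exact_mod_cast Knsh_one_natCast_succ hs0 hs1 (n + 1)
  have identity : (Knsh 1 s (n + 1 + 1) - Knsh 1 s (n + 1)) - (Knsh 1 s (n + 1) - Knsh 1 s n) =
      (1 - 2 * s) * (2 - 2 * s) *
        (Knsh 1 s n * ((1 / (n + 1 - s)) * (1 / (n + 1 + 1 - s)))) := by
    rw [hsucc, Knsh_one_natCast_succ hs0 hs1]
    field_simp
    ring
  have hinv := one_div_natCast_add_one_sub_le hs1 n
  have hinv' : 1 / ((n : ℝ) + 1 + 1 - s) ≤ 2 * (1 + (n : ℝ))⁻¹ :=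
    (one_div_le_one_div_of_le hden (by linarith)).trans hinv
  calc _ = (1 - 2 * s) * (2 - 2 * s) *
        (Knsh 1 s n * ((1 / (n + 1 - s)) * (1 / (n + 1 + 1 - s)))) := by
        rw [identity, abs_of_pos (by positivity)]
    _ ≤ (1 - 2 * s) * (2 - 2 * s) * (Knsh 1 s 0 * (1 + (n : ℝ)) ^ (-(1 - 2 * s)) *
        ((2 * (1 + (n : ℝ))⁻¹) * (2 * (1 + (n : ℝ))⁻¹))) := by
        gcongr
        exact hpos.le.trans hK
    _ = 4 * (1 - 2 * s) * (2 - 2 * s) * Knsh 1 s 0 * (1 + (n : ℝ)) ^ (-(1 - 2 * s) - 1 - 1) := by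
        rw [Real.rpow_sub_one (by positivity), Real.rpow_sub_one (by positivity)]; ring

end KernelDecay

lemma exists_abs_le_of_abs_reflect {D : ℤ → ℝ} {r : ℤ} {c q : ℝ} (hq : 0 ≤ q)
    (hreflect : ∀ m, |D (r - m)| = |D m|) (hD : ∀ n : ℕ, |D n| ≤ c * (1 + (n : ℝ)) ^ (-q)) :
    ∃ C > 0, ∀ m : ℤ, |D m| ≤ C * (1 + |(m : ℝ)|) ^ (-q) := by
  set w : ℤ → ℝ := fun m => (1 + |(m : ℝ)|) ^ (-q)
  have hw (m : ℤ) : 0 < w m := by positivity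
  have htop : D =O[atTop] w := by
    refine Asymptotics.IsBigO.of_bound c ?_
    filter_upwards [eventually_ge_atTop 0] with m hm
    lift m to ℕ using hm
    rw [Real.norm_of_nonneg (hw _).le]
    simpa [w] using hD m
  have hbot : D =O[atBot] w :=
    calc D =O[atBot] fun m => D (r - m) := Asymptotics.isBigO_of_le _ fun m => (hreflect m).ge
      _ =O[atBot] fun m => w (r - m) :=
          htop.comp_tendsto (tendsto_atTop_add_const_left _ r tendsto_neg_atBot_atTop)
      _ =O[atBot] w := by
          refine .of_bound ((1 + |(r : ℝ)|) ^ q) (.of_forall fun m => ?_)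
          rw [Real.norm_of_nonneg (hw _).le, Real.norm_of_nonneg (hw _).le]
          simpa [w] using one_add_abs_sub_rpow_neg_le hq r m
  obtain ⟨C, hC, hbound⟩ := Asymptotics.bound_of_isBigO_cofinite
    (Int.cofinite_eq ▸ hbot.sup htop : D =O[cofinite] w)
  refine ⟨C, hC, fun m => ?_⟩
  simpa only [Real.norm_eq_abs, abs_of_pos (hw m)] using hbound (hw m).ne'

lemma exists_abs_Knsh_one_le {s : ℝ} (hs0 : 0 < s) (hs1 : s < 1 / 2) :
    ∃ C > 0, (∀ m : ℤ, |Knsh 1 s m| ≤ C * (1 + |(m : ℝ)|) ^ (-(1 - 2 * s))) ∧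
      (∀ m : ℤ, |Knsh 1 s (m + 1) - Knsh 1 s m| ≤
        C * (1 + |(m : ℝ)|) ^ (-(1 - 2 * s) - 1)) ∧
      ∀ m : ℤ, |(Knsh 1 s (m + 1 + 1) - Knsh 1 s (m + 1)) - (Knsh 1 s (m + 1) - Knsh 1 s m)| ≤
        C * (1 + |(m : ℝ)|) ^ (-(1 - 2 * s) - 1 - 1) := by
  set Δ : ℤ → ℝ := fun m => Knsh 1 s (m + 1) - Knsh 1 s m
  have Δ_reflect (m : ℤ) : Δ (-1 - m) = -Δ m := by
    simp only [Δ, neg_sub]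
    rw [← Knsh_neg 1 s (-1 - m + 1), ← Knsh_neg 1 s (-1 - m)]
    congr 2 <;> ring
  obtain ⟨C₀, hC₀, size⟩ := exists_abs_le_of_abs_reflect (D := Knsh 1 s) (r := 0)
    (by linarith : 0 ≤ 1 - 2 * s) (fun m => by rw [zero_sub, Knsh_neg]) fun n => by
      rw [abs_of_pos (Knsh_one_natCast_pos hs0 hs1 n)]
      exact Knsh_one_natCast_le hs0 hs1 n
  obtain ⟨C₁, hC₁, smooth⟩ := exists_abs_le_of_abs_reflect (D := Δ) (r := -1)
    (by linarith : 0 ≤ 1 - 2 * s + 1) (fun m => by rw [Δ_reflect, abs_neg]) fun n => by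
      rw [neg_add']
      exact abs_Knsh_one_natCast_succ_sub_le hs0 hs1 n
  obtain ⟨C₂, hC₂, smooth₂⟩ := exists_abs_le_of_abs_reflect
    (D := fun m => Δ (m + 1) - Δ m) (r := -2) (by linarith : 0 ≤ 1 - 2 * s + 1 + 1)
    (fun m => by
      rw [show -2 - m + 1 = -1 - m by ring, show -2 - m = -1 - (m + 1) by ring, Δ_reflect,
        Δ_reflect, neg_sub_neg])
    fun n => by
      rw [neg_add', neg_add']
      exact abs_Knsh_one_natCast_second_difference_le hs0 hs1 n
  simp only [neg_add'] at smooth smooth₂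
  refine ⟨C₀ + C₁ + C₂, by positivity, fun m => (size m).trans ?_, fun m => (smooth m).trans ?_,
    fun m => (smooth₂ m).trans ?_⟩ <;> gcongr <;> linarith

lemma exists_isSingularKernel_Knsh {s : ℝ} (hs0 : 0 < s) (hs1 : s < 1 / 2) :
    ∃ C > 0, ∀ h : ℝ, 0 < h → IsSingularKernel (1 - 2 * s) (C * h ^ (2 * s)) (Knsh h s) := by
  obtain ⟨C, hC, size, smooth, -⟩ := exists_abs_Knsh_one_le hs0 hs1
  refine ⟨8 / (1 - (1 - 2 * s)) * C, mul_pos (div_pos (by norm_num) (by linarith)) hC,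
    fun h hh => ?_⟩
  rw [funext (Knsh_eq_rpow_mul h s)]
  exact (IsSingularKernel.of_lt_one (by linarith) (by linarith) size smooth).const_mul
    (by positivity)

lemma exists_isSingularKernel_Dp_Knsh {s : ℝ} (hs0 : 0 < s) (hs1 : s < 1 / 2) :
    ∃ C > 0, ∀ h : ℝ, 0 < h →
      IsSingularKernel (2 - 2 * s) (C * h ^ (2 * s - 1)) (Dp h (Knsh h s)) := by
  obtain ⟨C, hC, size, smooth, smooth₂⟩ := exists_abs_Knsh_one_le hs0 hs1
  refine ⟨2 * C, by positivity, fun h hh => ?_⟩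
  rw [Dp_Knsh hh, show 2 - 2 * s = 1 - 2 * s + 1 by ring]
  exact (IsSingularKernel.succ_sub (by linarith) size smooth smooth₂).const_mul (by positivity)

/-! ### Schauder estimates -/

theorem exists_ksemi_fracInt_le {α s : ℝ} (hα : 0 ≤ α) (hs0 : 0 < s) (hαs : 2 * s + α < 1) :
    ∃ C > 0, ∀ h : ℝ, 0 < h → ∀ f : ℤ → ℝ,
      (Summable fun m : ℤ => |f m| / (1 + |(m : ℝ)|) ^ (1 - 2 * s)) →
      ∀ k, ksemi h k (α + 2 * s) (fracInt h s f) ≤ ENNReal.ofReal C * ksemi h k α f := by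
  obtain ⟨C, hC, hK⟩ := exists_isSingularKernel_Knsh hs0 (by linarith)
  have hαa : α < 1 - 2 * s := by linarith
  have haα : 1 - 2 * s < α + 1 := by linarith
  refine ⟨_, mul_pos (holderConst_pos hαa haα) hC, fun h hh f hf k => ?_⟩
  rw [show α + 2 * s = α + 1 - (1 - 2 * s) by ring]
  exact ksemi_discreteConv_le hα hαa haα hC hh (by simpa using hK h hh)
    ((hK h hh).convolvable (by linarith) hf) k

theorem exists_ksemi_succ_fracInt_le {α s : ℝ} (hα : α < 2 - 2 * s) (hs0 : 0 < s) (hs1 : s < 1 / 2)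
    (hαs : 1 < 2 * s + α) :
    ∃ C > 0, ∀ h : ℝ, 0 < h → ∀ f : ℤ → ℝ,
      (Summable fun m : ℤ => |f m| / (1 + |(m : ℝ)|) ^ (1 - 2 * s)) →
      ∀ k, ksemi h (k + 1) (α + 2 * s - 1) (fracInt h s f) ≤ ENNReal.ofReal C * ksemi h k α f := by
  obtain ⟨C₀, -, hK⟩ := exists_isSingularKernel_Knsh hs0 hs1
  obtain ⟨C, hC, hDK⟩ := exists_isSingularKernel_Dp_Knsh hs0 hs1
  have haα : 2 - 2 * s < α + 1 := by linarith
  refine ⟨2 * (holderConst (2 - 2 * s) α * C),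
    mul_pos two_pos (mul_pos (holderConst_pos hα haα) hC), fun h hh f hf k => ?_⟩
  have hconv : Convolvable (Knsh h s) f := (hK h hh).convolvable (by linarith) hf
  have hDp : Dp h (fracInt h s f) = discreteConv (Dp h (Knsh h s)) f :=
    funext fun j => (hconv.hasSum_Dp_kernel h j).tsum_eq.symm
  calc ksemi h (k + 1) (α + 2 * s - 1) (fracInt h s f)
      ≤ 2 * ksemi h k (α + 2 * s - 1) (Dp h (fracInt h s f)) := ksemi_succ_le ..
    _ = 2 * ksemi h k (α + 1 - (2 - 2 * s)) (discreteConv (Dp h (Knsh h s)) f) := by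
        rw [hDp]; ring_nf
    _ ≤ 2 * (ENNReal.ofReal (holderConst (2 - 2 * s) α * C) * ksemi h k α f) := by
        gcongr
        refine ksemi_discreteConv_le (by linarith) hα haα hC hh ?_
          (fun j => (hconv.hasSum_Dp_kernel h j).summable) k
        convert hDK h hh using 3; ring
    _ = ENNReal.ofReal (2 * (holderConst (2 - 2 * s) α * C)) * ksemi h k α f := by
        rw [ENNReal.ofReal_mul zero_le_two, ENNReal.ofReal_ofNat, mul_assoc]

lemma hsemi_zero_le_of_abs_le {h M : ℝ} {f : ℤ → ℝ} (hh : 0 < h) (hf : ∀ j, |f j| ≤ M) :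
    hsemi h 0 f ≤ ENNReal.ofReal (2 * M) := by
  have hM : 0 ≤ M := (abs_nonneg _).trans (hf 0)
  rw [hsemi_le_ofReal_iff hh (by positivity)]
  intro j m
  rw [Real.rpow_zero, mul_one, two_mul]
  exact (abs_sub _ _).trans (add_le_add (hf j) (hf m))

theorem exists_hsemi_fracInt_le_of_abs_le {s : ℝ} (hs0 : 0 < s) (hs1 : s < 1 / 2) :
    ∃ C > 0, ∀ h : ℝ, 0 < h → ∀ f : ℤ → ℝ, ∀ M : ℝ,
      (Summable fun m : ℤ => |f m| / (1 + |(m : ℝ)|) ^ (1 - 2 * s)) →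
      (∀ j : ℤ, |f j| ≤ M) →
      hsemi h (2 * s) (fracInt h s f) ≤ ENNReal.ofReal (C * M) := by
  obtain ⟨C, hC, hbound⟩ := exists_ksemi_fracInt_le le_rfl hs0 (by linarith)
  refine ⟨C * 2, by positivity, fun h hh f M hf hM => ?_⟩
  calc hsemi h (2 * s) (fracInt h s f) ≤ ENNReal.ofReal C * hsemi h 0 f := by
        simpa [ksemi] using hbound h hh f hf 0
    _ ≤ ENNReal.ofReal C * ENNReal.ofReal (2 * M) := by
        gcongr; exact hsemi_zero_le_of_abs_le hh hM
    _ = ENNReal.ofReal (C * 2 * M) := by rw [← ENNReal.ofReal_mul hC.le, mul_assoc]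

theorem fracInt_discrete_Schauder_general {s : ℝ} (hs0 : 0 < s) (hs1 : s < 1 / 2) :
    (∀ α : ℝ, 0 ≤ α → 2 * s + α < 1 → ∃ C > 0, ∀ h : ℝ, 0 < h → ∀ f : ℤ → ℝ,
      (Summable fun m : ℤ => |f m| / (1 + |(m : ℝ)|) ^ (1 - 2 * s)) →
      ∀ k, ksemi h k (α + 2 * s) (fracInt h s f) ≤ ENNReal.ofReal C * ksemi h k α f) ∧
    (∀ α : ℝ, 1 < 2 * s + α → 2 * s + α < 2 → ∃ C > 0, ∀ h : ℝ, 0 < h → ∀ f : ℤ → ℝ,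
      (Summable fun m : ℤ => |f m| / (1 + |(m : ℝ)|) ^ (1 - 2 * s)) →
      ∀ k, ksemi h (k + 1) (α + 2 * s - 1) (fracInt h s f) ≤
        ENNReal.ofReal C * ksemi h k α f) ∧
    (∃ C > 0, ∀ h : ℝ, 0 < h → ∀ f : ℤ → ℝ, ∀ M : ℝ,
      (Summable fun m : ℤ => |f m| / (1 + |(m : ℝ)|) ^ (1 - 2 * s)) →
      (∀ j : ℤ, |f j| ≤ M) →
      hsemi h (2 * s) (fracInt h s f) ≤ ENNReal.ofReal (C * M)) :=
  ⟨fun _ hα hαs => exists_ksemi_fracInt_le hα hs0 hαs,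
    fun _ hαs hαs2 => exists_ksemi_succ_fracInt_le (by linarith) hs0 hs1 hαs,
    exists_hsemi_fracInt_le_of_abs_le hs0 hs1⟩

/-- Discrete Schauder estimates for the fractional discrete integral. -/
theorem fracInt_discrete_Schauder (k : ℕ) (α s : ℝ)
    (hα0 : 0 < α) (hα1 : α ≤ 1) (hs0 : 0 < s) (hs1 : s < 1/2) :
    (2 * s + α < 1 → ∃ C : ℝ, 0 < C ∧ ∀ h : ℝ, 0 < h → ∀ f : ℤ → ℝ,
      (Summable fun m : ℤ => |f m| / (1 + |(m : ℝ)|) ^ (1 - 2 * s)) →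
      ksemi h k α f < ⊤ →
      ksemi h k (α + 2 * s) (fracInt h s f) ≤ ENNReal.ofReal C * ksemi h k α f) ∧
    (1 < 2 * s + α → ∃ C : ℝ, 0 < C ∧ ∀ h : ℝ, 0 < h → ∀ f : ℤ → ℝ,
      (Summable fun m : ℤ => |f m| / (1 + |(m : ℝ)|) ^ (1 - 2 * s)) →
      ksemi h k α f < ⊤ →
      ksemi h (k + 1) (α + 2 * s - 1) (fracInt h s f) ≤
        ENNReal.ofReal C * ksemi h k α f) ∧
    (∃ C : ℝ, 0 < C ∧ ∀ h : ℝ, 0 < h → ∀ f : ℤ → ℝ, ∀ M : ℝ,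
      (Summable fun m : ℤ => |f m| / (1 + |(m : ℝ)|) ^ (1 - 2 * s)) →
      (∀ j : ℤ, |f j| ≤ M) →
      hsemi h (2 * s) (fracInt h s f) ≤ ENNReal.ofReal (C * M)) := by
  obtain ⟨below_one, above_one, bounded⟩ := fracInt_discrete_Schauder_general hs0 hs1
  refine ⟨fun hαs => (below_one α hα0.le hαs).imp fun C hC => ?_,
    fun hαs => (above_one α hαs (by linarith)).imp fun C hC => ?_, bounded⟩ <;>
  exact ⟨hC.1, fun h hh f hf _ => hC.2 h hh f hf k⟩
end
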